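/- arXiv:2007.11159 — 2 statements merged into one kernel-verified Lean document; each statement's English description precedes it below -/
import Mathlib

section
/- Let A be a local ring whose residue field has at least four elements, let I be a proper ideal of A and set R := A/I. Then the cokernel of the map H₂(Γ₀(I), ℤ) → H₂(SL₂(A), ℤ) induced by the inclusion Γ₀(I) ⊆ SL₂(A) is naturally isomorphic to I²(R); that is, there is an exact sequence H₂(Γ₀(I), ℤ) → H₂(SL₂(A), ℤ) → I²(R) → 0. -/
/-!
The group `G = SL₂(A)` acts on the projective line `X = G / Γ₀(I)` of `R = A / I`, and two points are
in general position when their reductions to the residue field differ. Choosing a column for every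
point, two points in general position have a determinant `d(x,y) ∈ Rˣ`, and the class
`tri(x,y,z) = ⟨d(x,y) d(y,z) d(x,z)⟩ ∈ GW(R)` of a triple is `G`-invariant. By the Plücker relation
and the Steinberg relation it is a 2-cocycle (`tri_cocycle`). Since the residue field has at least
four elements, the projective line over it has at least five points, so that the complex of cochains
on tuples in general position is exact in degrees 1 and 2 (`gp_exact_one`, `gp_exact_two`). A
primitive `φ` of `tri` on pairs therefore exists, its translates differ from `φ` by coboundaries of
functions `η γ` on `X`, and `η` has as coboundary a group 2-cocycle `c` of `G` with values in `GW(R)`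
(`exists_main`). Evaluation of `c` on cycles is the map `H₂(SL₂(A), ℤ) → I²(R)`.

* The values lie in `I²(R)`, because modulo `I²(R)` the cocycle `tri` has the primitive
  `1 + ⟨⟨d(x,y)⟩⟩`, whose transgression is trivial (`main_mem`).
* The map is onto: a `ℚ/ℤ`-valued character `ψ` of `GW(R)` which kills all values makes `ψ ∘ c` a
  coboundary. Additive functions on `Γ₀(I)` factor through the diagonal character, so `ψ ∘ tri` has
  the form of a constant plus an additive function of the unit, and such a `ψ` kills `I²(R)`
  (`main_char`). Since `ℚ/ℤ` separates points, the values on cycles are all of `I²(R)`.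
* The classes from `Γ₀(I)` are killed, because `η` is normalized to vanish at `∞`, which `Γ₀(I)`
  fixes.
* Nothing else is killed: let `F` be a `ℚ/ℤ`-valued cocycle of `G` which vanishes on `Γ₀(I)`. It is
  the coboundary of some `η` with values in the functions on `X` (`rel_cocycle`). After a correction
  by a character, `η γ 0 - η γ ∞` vanishes on the stabilizer of `(∞, 0)` (`theta_normalize`); here one
  needs that the character is trivial on `diag(a, a⁻¹)` when `a² ≡ 1` modulo `I` (`theta_diag`).
  Hence `η` comes from a function on pairs in general position (`exists_prim`) whose coboundary is
  an invariant cocycle on triples. Such a cocycle is a function of the square class of the triple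
  (`exists_bb`) satisfying the Steinberg relation (`bb_steinberg`), that is, the composite of `tri`
  with a character of `GW(R)`. So `F` agrees on cycles with a character applied to `c`
  (`main_ker`), and duality with `ℚ/ℤ` finishes the proof.
-/

noncomputable section

/-- The group of square classes `R^× / (R^×)²`, denoted `G_R`. -/
def SqCl (R : Type*) [CommRing R] : Type _ :=
  Rˣ ⧸ (powMonoidHom 2 : Rˣ →* Rˣ).range

instance (R : Type*) [CommRing R] : CommGroup (SqCl R) :=
  QuotientGroup.Quotient.commGroup _

/-- The class of a unit in the group of square classes. -/
def sqc {R : Type*} [CommRing R] (u : Rˣ) : SqCl R := QuotientGroup.mk u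

/-- The group ring `κ[G_R]` of square classes, denoted `R_R` in the paper (for `κ = ℤ`;
for `κ = ℤ[1/2]` it is `R_R[1/2]`). -/
abbrev GRing (κ : Type*) [CommRing κ] (R : Type*) [CommRing R] : Type _ :=
  MonoidAlgebra κ (SqCl R)

/-- `⟨u⟩`, the square class of a unit `u` viewed in the group ring. -/
def gcl (κ : Type*) [CommRing κ] {R : Type*} [CommRing R] (u : Rˣ) : GRing κ R :=
  MonoidAlgebra.of κ (SqCl R) (sqc u)

/-- `⟨⟨u⟩⟩ := ⟨u⟩ - 1`. -/
def gcc (κ : Type*) [CommRing κ] {R : Type*} [CommRing R] (u : Rˣ) : GRing κ R :=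
  gcl κ u - 1

/-- The augmentation ideal `I_R`, generated by the elements `g - 1`, `g ∈ G_R`. -/
def augId (κ : Type*) [CommRing κ] (R : Type*) [CommRing R] : Ideal (GRing κ R) :=
  Ideal.span (Set.range fun g : SqCl R => (MonoidAlgebra.of κ (SqCl R) g - 1))

/-- `p₋₁⁺ := ⟨-1⟩ + 1`. -/
def pminus (κ : Type*) [CommRing κ] (R : Type*) [CommRing R] : GRing κ R :=
  gcl κ (-1 : Rˣ) + 1

/-- `W_R = {a ∈ R^× : 1 - a ∈ R^×}`. -/
def WU (R : Type*) [CommRing R] : Type _ := {a : Rˣ // IsUnit ((1 : R) - (a : R))}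

namespace WU

variable {R : Type*} [CommRing R]

instance : CoeHead (WU R) Rˣ := ⟨Subtype.val⟩

/-- `1 - a` as a unit, for `a ∈ W_R`. -/
def usub (a : WU R) : Rˣ := a.2.unit

@[simp] lemma usub_coe (a : WU R) : ((usub a : Rˣ) : R) = 1 - ((a : Rˣ) : R) := a.2.unit_spec

/-- `a - 1` as a unit, for `a ∈ W_R`. -/
def usub' (a : WU R) : Rˣ := -usub a

/-- `a⁻¹ - 1` as a unit, for `a ∈ W_R`. -/
def uinvsub (a : WU R) : Rˣ := (a : Rˣ)⁻¹ * usub a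

/-- `1 - a ∈ W_R` when `a ∈ W_R`. -/
def oneSub (a : WU R) : WU R :=
  ⟨usub a, by rw [usub_coe, sub_sub_cancel]; exact (a : Rˣ).isUnit⟩

/-- `a⁻¹ ∈ W_R` when `a ∈ W_R`. -/
def winv (a : WU R) : WU R := by
  refine ⟨(a : Rˣ)⁻¹, ?_⟩
  have h : (((((a : Rˣ)⁻¹ * (-usub a)) : Rˣ)) : R) = 1 - (((a : Rˣ)⁻¹ : Rˣ) : R) := by
    have h1 := Units.inv_mul (a : Rˣ)
    push_cast [usub_coe]
    linear_combination h1
  rw [← h]; exact Units.isUnit _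

/-- The image of an element of `W_A` under a ring homomorphism `A → B` carrying units to
units, as an element of `W_B`. -/
def mapRH {A B : Type*} [CommRing A] [CommRing B] (f : A →+* B) (a : WU A) : WU B :=
  ⟨Units.map (f : A →* B) (a : Aˣ), by
    have h := a.2.map f
    rw [map_sub, map_one] at h
    simpa using h⟩

end WU

/-- The free `R_R`-module on the symbols `[a]`, `a ∈ W_R`. -/
abbrev preRP (κ : Type*) [CommRing κ] (R : Type*) [CommRing R] : Type _ :=
  WU R →₀ GRing κ R

/-- The basis element `[a]` of the free module. -/
def pregen (κ : Type*) [CommRing κ] {R : Type*} [CommRing R] (a : WU R) : preRP κ R :=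
  Finsupp.single a 1

/-- The set of defining relations of `RP(R)`:  the elements
`[a] - [b] + ⟨a⟩[b/a] - ⟨a⁻¹-1⟩[(1-a⁻¹)/(1-b⁻¹)] - ⟨1-a⟩[(1-a)/(1-b)]`
whenever `a, b, a/b ∈ W_R` (here `c = b/a`, `d = (1-a⁻¹)/(1-b⁻¹)`, `e = (1-a)/(1-b)`). -/
def RPrel (κ : Type*) [CommRing κ] (R : Type*) [CommRing R] : Set (preRP κ R) :=
  { x | ∃ a b c d e : WU R,
      ((c : Rˣ) : R) * ((a : Rˣ) : R) = ((b : Rˣ) : R) ∧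
      ((d : Rˣ) : R) * (1 - (((b : Rˣ)⁻¹ : Rˣ) : R)) = 1 - (((a : Rˣ)⁻¹ : Rˣ) : R) ∧
      ((e : Rˣ) : R) * (1 - ((b : Rˣ) : R)) = 1 - ((a : Rˣ) : R) ∧
      x = pregen κ a - pregen κ b + gcl κ (a : Rˣ) • pregen κ c
          - gcl κ (WU.uinvsub a) • pregen κ d - gcl κ (WU.usub a) • pregen κ e }

/-- The submodule of relations. -/
def RPsub (κ : Type*) [CommRing κ] (R : Type*) [CommRing R] :
    Submodule (GRing κ R) (preRP κ R) :=
  Submodule.span (GRing κ R) (RPrel κ R)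

/-- The refined pre-Bloch group (refined scissors congruence group) `RP(R)`,
as a module over the group ring `R_R`. -/
abbrev RP (κ : Type*) [CommRing κ] (R : Type*) [CommRing R] : Type _ :=
  preRP κ R ⧸ RPsub κ R

/-- The generator `[a]` of `RP(R)`. -/
def rp (κ : Type*) [CommRing κ] {R : Type*} [CommRing R] (a : WU R) : RP κ R :=
  Submodule.Quotient.mk (pregen κ a)

/-- The map `λ₁ : [a] ↦ ⟨⟨a⟩⟩⟨⟨1-a⟩⟩`, defined on the free module. -/
def lamOne (κ : Type*) [CommRing κ] (R : Type*) [CommRing R] :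
    preRP κ R →ₗ[GRing κ R] GRing κ R :=
  Finsupp.linearCombination (GRing κ R)
    (fun a => gcc κ (a : Rˣ) * gcc κ (WU.usub a))

/-- The refined scissors congruence group `RP₁(R) = ker λ₁`, as a submodule of `RP(R)`. -/
def RP1 (κ : Type*) [CommRing κ] (R : Type*) [CommRing R] : Submodule (GRing κ R) (RP κ R) :=
  Submodule.map (RPsub κ R).mkQ (LinearMap.ker (lamOne κ R))

/-- `ψ₁(a) = [a] + ⟨-1⟩[a⁻¹]` for `a ∈ W_R`. -/
def psiOne (κ : Type*) [CommRing κ] {R : Type*} [CommRing R] (a : WU R) : RP κ R :=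
  rp κ a + gcl κ (-1 : Rˣ) • rp κ (WU.winv a)

/-- The submodule `K_R^{(1)}` generated by the elements `ψ₁(a)`, `a ∈ R^×`
(equivalently, by the `ψ₁(a)`, `a ∈ W_R`). -/
def Kpsi (κ : Type*) [CommRing κ] (R : Type*) [CommRing R] : Submodule (GRing κ R) (RP κ R) :=
  Submodule.span (GRing κ R) { x | ∃ a : WU R, x = psiOne κ a }

/-- `\widetilde{RP}(R) := RP(R)/K_R^{(1)}`. -/
abbrev RPt (κ : Type*) [CommRing κ] (R : Type*) [CommRing R] : Type _ :=
  RP κ R ⧸ Kpsi κ R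

/-- The generator `[a]` of `\widetilde{RP}(R)`. -/
def rpt (κ : Type*) [CommRing κ] {R : Type*} [CommRing R] (a : WU R) : RPt κ R :=
  Submodule.Quotient.mk (rp κ a)

/-- The ideal `p₋₁⁺ I_R` of the group ring. -/
def pIdeal (κ : Type*) [CommRing κ] (R : Type*) [CommRing R] : Ideal (GRing κ R) :=
  augId κ R * Ideal.span {pminus κ R}

/-- `\widetilde{RP}₁(R) = ker(λ̃₁ : \widetilde{RP}(R) → I_R²/p₋₁⁺I_R)` as a submodule
of `\widetilde{RP}(R)`. -/
def RPt1 (κ : Type*) [CommRing κ] (R : Type*) [CommRing R] :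
    Submodule (GRing κ R) (RPt κ R) :=
  Submodule.map ((Kpsi κ R).mkQ ∘ₗ (RPsub κ R).mkQ)
    (Submodule.comap (lamOne κ R) (pIdeal κ R))

/-- The expression `C_R(a) = [a] + ⟨-1⟩[1-a] + ⟨⟨1-a⟩⟩ψ₁(a)`;  the constant `C_R ∈ RP(R)` is
this element, for any (every) choice of `a ∈ W_R`. -/
def Cexpr (κ : Type*) [CommRing κ] {R : Type*} [CommRing R] (a : WU R) : RP κ R :=
  rp κ a + gcl κ (-1 : Rˣ) • rp κ (WU.oneSub a) + gcc κ (WU.usub a) • psiOne κ a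

/-- `ℤ[1/2]`, the localization of `ℤ` away from `2`. -/
abbrev Half : Type := Localization.Away (2 : ℤ)

/-- A field is *sufficiently large* if it is infinite, or finite with `p^d` elements
where `d(p-1) > 6`. -/
def SuffLarge (k : Type*) : Prop :=
  Infinite k ∨ ∃ p d : ℕ, p.Prime ∧ Nat.card k = p ^ d ∧ 6 < d * (p - 1)

/-- The map on square classes induced by a ring homomorphism. -/
def sqMapRH {A B : Type*} [CommRing A] [CommRing B] (f : A →+* B) : SqCl A →* SqCl B :=
  QuotientGroup.map _ _ (Units.map (f : A →* B))
    (by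
      rintro x ⟨y, rfl⟩
      exact ⟨Units.map (f : A →* B) y, by simp [powMonoidHom]⟩)

/-- For a module `M` over the group ring `κ[G_R]`, a group `G₀` mapping to `G_R` and a
character `χ : G₀ → {±1}`, this is the subgroup `R^χ M` generated by the elements
`g•m - χ(g)m`.  The quotient `M_χ = M/R^χM` is `M ⧸ chSub ...`. -/
def chSub (κ : Type*) [CommRing κ] {R : Type*} [CommRing R] {G₀ : Type*} [Group G₀]
    (t : G₀ →* SqCl R) (χ : G₀ →* ℤˣ)
    (M : Type*) [AddCommGroup M] [Module (GRing κ R) M] : Submodule ℤ M :=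
  Submodule.span ℤ
    {x | ∃ (g : G₀) (m : M),
      x = (MonoidAlgebra.of κ (SqCl R) (t g)) • m - ((χ g : ℤ) : ℤ) • m}

/-- The Steinberg ideal `⟨⟨⟨a⟩⟩⟨⟨1-a⟩⟩ : a ∈ W_R⟩` of the group ring. -/
def StRel (κ : Type*) [CommRing κ] (R : Type*) [CommRing R] : Ideal (GRing κ R) :=
  Ideal.span {x | ∃ a : WU R, x = gcc κ ((a : Rˣ)) * gcc κ (WU.usub a)}

/-- The Grothendieck–Witt ring `GW(R) = κ[G_R]/⟨⟨⟨a⟩⟩⟨⟨1-a⟩⟩⟩`. -/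
abbrev GWq (κ : Type*) [CommRing κ] (R : Type*) [CommRing R] : Type _ :=
  GRing κ R ⧸ StRel κ R

/-- The fundamental ideal `I(R)` of the Grothendieck–Witt ring. -/
def IfundGW (κ : Type*) [CommRing κ] (R : Type*) [CommRing R] : Ideal (GWq κ R) :=
  (augId κ R).map (Ideal.Quotient.mk (StRel κ R))

/-- The relations of the classical scissors congruence group `P(R)`:
`[a] - [b] + [b/a] - [(1-a⁻¹)/(1-b⁻¹)] + [(1-a)/(1-b)]`. -/
def PRel (κ : Type*) [CommRing κ] (R : Type*) [CommRing R] : Set (WU R →₀ κ) :=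
  { x | ∃ a b c d e : WU R,
      ((c : Rˣ) : R) * ((a : Rˣ) : R) = ((b : Rˣ) : R) ∧
      ((d : Rˣ) : R) * (1 - (((b : Rˣ)⁻¹ : Rˣ) : R)) = 1 - (((a : Rˣ)⁻¹ : Rˣ) : R) ∧
      ((e : Rˣ) : R) * (1 - ((b : Rˣ) : R)) = 1 - ((a : Rˣ) : R) ∧
      x = Finsupp.single a 1 - Finsupp.single b 1 + Finsupp.single c 1
          - Finsupp.single d 1 + Finsupp.single e 1 }

/-- The scissors congruence group (pre-Bloch group) `P(R)` of Dupont–Sah. -/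
abbrev Pgrp (κ : Type*) [CommRing κ] (R : Type*) [CommRing R] : Type _ :=
  (WU R →₀ κ) ⧸ Submodule.span κ (PRel κ R)

/-- The generator `[a]` of `P(R)`. -/
def pcl (κ : Type*) [CommRing κ] {R : Type*} [CommRing R] (a : WU R) : Pgrp κ R :=
  Submodule.Quotient.mk (Finsupp.single a 1)

/-- The subgroup `K_R` of `P(R)` generated by the elements `{a} = [a] + [a⁻¹]`. -/
def PKsub (κ : Type*) [CommRing κ] (R : Type*) [CommRing R] : Submodule κ (Pgrp κ R) :=
  Submodule.span κ {x | ∃ a : WU R, x = pcl κ a + pcl κ (WU.winv a)}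

/-- `\widetilde{P}(R) := P(R)/K_R`. -/
abbrev Ptld (κ : Type*) [CommRing κ] (R : Type*) [CommRing R] : Type _ :=
  Pgrp κ R ⧸ PKsub κ R

/-- The generator `[a]` of `\widetilde{P}(R)`. -/
def ptcl (κ : Type*) [CommRing κ] {R : Type*} [CommRing R] (a : WU R) : Ptld κ R :=
  Submodule.Quotient.mk (pcl κ a)

namespace GroupHomology

variable (κ : Type*) [CommRing κ] (G : Type*) [Group G]

/-- The group of `n`-chains of the (inhomogeneous) bar complex of `G` with coefficients
in `κ`: the free `κ`-module on `n`-tuples of elements of `G`. -/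
abbrev Ch (n : ℕ) : Type _ := (Fin n → G) →₀ κ

variable {G}

/-- The `i`-th face of an `(n+1)`-tuple (`0 ≤ i ≤ n+1`): drop the first entry (`i = 0`),
drop the last entry (`i = n+1`), or multiply two consecutive entries. -/
def face {n : ℕ} (i : ℕ) (g : Fin (n + 1) → G) : Fin n → G := fun m =>
  if ((m : ℕ) + 1 : ℕ) < i then g m.castSucc
  else if ((m : ℕ) + 1 : ℕ) = i then g m.castSucc * g m.succ
  else g m.succ

variable (G)

/-- The value of the bar differential on a basis element. -/
def dfun {n : ℕ} (g : Fin (n + 1) → G) : Ch κ G n :=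
  ∑ i ∈ Finset.range (n + 2), ((-1 : κ) ^ i) • Finsupp.single (face i g) (1 : κ)

/-- The differential of the bar complex. -/
def dd (n : ℕ) : Ch κ G (n + 1) →ₗ[κ] Ch κ G n :=
  Finsupp.linearCombination κ (dfun κ G)

/-- The cycles of the bar complex (`Z_0` is everything). -/
def cycles : (n : ℕ) → Submodule κ (Ch κ G n)
  | 0 => ⊤
  | (n + 1) => LinearMap.ker (dd κ G n)

/-- The quotient of `n`-chains by `n`-boundaries. -/
abbrev ChQ (n : ℕ) : Type _ := Ch κ G n ⧸ LinearMap.range (dd κ G n)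

/-- The `n`-th homology of `G` with coefficients in `κ`: cycles modulo boundaries,
realized as the image of the cycles in the quotient of chains by boundaries. -/
def Hsub (n : ℕ) : Submodule κ (ChQ κ G n) :=
  Submodule.map (LinearMap.range (dd κ G n)).mkQ (cycles κ G n)

/-- The `n`-th homology of `G` with coefficients in `κ`. -/
abbrev H (n : ℕ) : Type _ := ↥(Hsub κ G n)

/-- The homology class of a cycle. -/
def hcl {n : ℕ} (x : Ch κ G n) (hx : x ∈ cycles κ G n) : H κ G n :=
  ⟨Submodule.Quotient.mk x, Submodule.mem_map_of_mem hx⟩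

variable {G} {G' : Type*} [Group G']

/-- The chain map induced by a group homomorphism. -/
def chmap (f : G →* G') (n : ℕ) : Ch κ G n →ₗ[κ] Ch κ G' n :=
  Finsupp.lmapDomain κ κ (fun g => (f : G → G') ∘ g)

lemma face_comp (f : G →* G') {n : ℕ} (i : ℕ) (g : Fin (n + 1) → G) :
    face i ((f : G → G') ∘ g) = (f : G → G') ∘ face i g := by
  funext m
  simp only [Function.comp_apply]
  unfold face
  by_cases h1 : ((m : ℕ) + 1 : ℕ) < i
  · simp [h1]
  · by_cases h2 : ((m : ℕ) + 1 : ℕ) = i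
    · simp [h1, h2, map_mul]
    · simp [h1, h2]

lemma chmap_single (f : G →* G') {n : ℕ} (g : Fin n → G) (c : κ) :
    chmap κ f n (Finsupp.single g c) = Finsupp.single ((f : G → G') ∘ g) c := by
  simp [chmap, Finsupp.lmapDomain_apply, Finsupp.mapDomain_single]

lemma dd_single {n : ℕ} (g : Fin (n + 1) → G) :
    dd κ G n (Finsupp.single g 1) = dfun κ G g := by
  simp [dd, Finsupp.linearCombination_single]

lemma chmap_comm (f : G →* G') (n : ℕ) :
    (dd κ G' n) ∘ₗ (chmap κ f (n + 1)) = (chmap κ f n) ∘ₗ (dd κ G n) := by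
  refine Finsupp.lhom_ext' (fun g => LinearMap.ext_ring ?_)
  simp only [LinearMap.comp_apply, Finsupp.lsingle_apply]
  rw [chmap_single, dd_single, dd_single]
  unfold dfun
  rw [map_sum]
  refine Finset.sum_congr rfl (fun i _ => ?_)
  rw [map_smul, chmap_single, face_comp]

lemma chmap_comm_apply (f : G →* G') (n : ℕ) (x : Ch κ G (n + 1)) :
    dd κ G' n (chmap κ f (n + 1) x) = chmap κ f n (dd κ G n x) :=
  DFunLike.congr_fun (chmap_comm κ f n) x

lemma chmap_cycles (f : G →* G') (n : ℕ) {x : Ch κ G n} (hx : x ∈ cycles κ G n) :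
    chmap κ f n x ∈ cycles κ G' n := by
  cases n with
  | zero => trivial
  | succ n =>
      simp only [cycles, LinearMap.mem_ker] at hx ⊢
      rw [chmap_comm_apply, hx, map_zero]

/-- The map induced on the quotients of chains by boundaries. -/
def chqmap (f : G →* G') (n : ℕ) : ChQ κ G n →ₗ[κ] ChQ κ G' n :=
  Submodule.mapQ _ _ (chmap κ f n)
    (by
      rintro x ⟨y, hy⟩
      exact ⟨chmap κ f (n + 1) y, by rw [← hy, chmap_comm_apply]⟩)

/-- The map induced on homology by a group homomorphism. -/
def Hmap (f : G →* G') (n : ℕ) : H κ G n →ₗ[κ] H κ G' n :=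
  (chqmap κ f n).restrict (p := Hsub κ G n) (q := Hsub κ G' n)
    (by
      rintro x ⟨y, hy, rfl⟩
      exact ⟨chmap κ f n y, chmap_cycles κ f n hy, rfl⟩)

lemma Hmap_hcl (f : G →* G') (n : ℕ) (x : Ch κ G n) (hx : x ∈ cycles κ G n) :
    Hmap κ f n (hcl κ G x hx) = hcl κ G' (chmap κ f n x) (chmap_cycles κ f n hx) := rfl


/-- The 2-chain `[(s|t)] - [(t|s)]` is a cycle when `s` and `t` commute. -/
lemma pont_mem_cycles {s t : G} (h : s * t = t * s) :
    (Finsupp.single ![s, t] (1 : κ) - Finsupp.single ![t, s] 1) ∈ cycles κ G 2 := by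
  have hc : cycles κ G 2 = LinearMap.ker (dd κ G 1) := rfl
  rw [hc, LinearMap.mem_ker, map_sub, dd_single, dd_single]
  have key : ∀ a b : G, dfun κ G ![a, b] =
      Finsupp.single ![b] 1 - Finsupp.single ![a * b] 1 + Finsupp.single ![a] 1 := by
    intro a b
    have f0 : face 0 ![a, b] = ![b] := by
      funext m; fin_cases m; simp [face]
    have f1 : face 1 ![a, b] = ![a * b] := by
      funext m; fin_cases m; simp [face]
    have f2 : face 2 ![a, b] = ![a] := by
      funext m; fin_cases m; simp [face]
    unfold dfun
    rw [show (1 : ℕ) + 2 = 3 from rfl, Finset.sum_range_succ, Finset.sum_range_succ,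
      Finset.sum_range_one, f0, f1, f2]
    simp only [pow_zero, pow_one, one_smul]
    module
  rw [key, key, h]
  abel

/-- The Pontryagin (pontrjagin) product `c(s,t) ∈ H₂(G)` of two commuting elements of `G`:
the image of the canonical generator of `H₂(ℤ²)` under `(m,n) ↦ s^m t^n`,
i.e. the class of the cycle `[(s|t)] - [(t|s)]`. -/
def pontryagin (s t : G) (h : s * t = t * s) : H κ G 2 :=
  hcl κ G _ (pont_mem_cycles κ h)

end GroupHomology

/-- `SL₂(R)`. -/
abbrev SL2 (R : Type*) [CommRing R] : Type _ := Matrix.SpecialLinearGroup (Fin 2) R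

/-- The congruence subgroup `Γ₀(I) = { (a b; c d) ∈ SL₂(A) : c ∈ I }`. -/
def Gamma0 {A : Type*} [CommRing A] (I : Ideal A) : Subgroup (SL2 A) where
  carrier := { g | (g : Matrix (Fin 2) (Fin 2) A) 1 0 ∈ I }
  one_mem' := by
    simp only [Set.mem_setOf_eq, Matrix.SpecialLinearGroup.coe_one]
    rw [Matrix.one_apply_ne (by decide)]
    exact I.zero_mem
  mul_mem' := by
    intro a b ha hb
    simp only [Set.mem_setOf_eq, Matrix.SpecialLinearGroup.coe_mul] at *
    rw [Matrix.mul_apply, Fin.sum_univ_two]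
    exact I.add_mem (I.mul_mem_right _ ha) (I.mul_mem_left _ hb)
  inv_mem' := by
    intro a ha
    simp only [Set.mem_setOf_eq] at *
    rw [Matrix.SpecialLinearGroup.coe_inv, Matrix.adjugate_fin_two]
    simpa using I.neg_mem ha

private lemma conj_mul_aux {M : Type*} [Monoid M] (m mi x y : M) (h : mi * m = 1) :
    m * (x * y) * mi = (m * x * mi) * (m * y * mi) := by
  have : (m * x * mi) * (m * y * mi) = m * (x * (y * mi)) := by
    simp only [mul_assoc]
    rw [← mul_assoc mi m (y * mi), h, one_mul]
  rw [this]
  simp [mul_assoc]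

/-- Conjugation by an invertible `2 × 2`-matrix, as an endomorphism of `SL₂(R)`. -/
def conjSL {R : Type*} [CommRing R] (M : GL (Fin 2) R) : SL2 R →* SL2 R where
  toFun X := ⟨(M : Matrix (Fin 2) (Fin 2) R) * (X : Matrix (Fin 2) (Fin 2) R) *
      ((M⁻¹ : GL (Fin 2) R) : Matrix (Fin 2) (Fin 2) R), by
    rw [show ((M⁻¹ : GL (Fin 2) R) : Matrix (Fin 2) (Fin 2) R)
        = (↑M : Matrix (Fin 2) (Fin 2) R)⁻¹ from Matrix.coe_units_inv M,
      Matrix.det_conj M.isUnit, X.2]⟩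
  map_one' := by
    apply Subtype.ext
    have h : (M : Matrix (Fin 2) (Fin 2) R) * ((M⁻¹ : GL (Fin 2) R) : Matrix (Fin 2) (Fin 2) R)
        = 1 := by
      rw [← Units.val_mul, mul_inv_cancel, Units.val_one]
    simp only [Matrix.SpecialLinearGroup.coe_one, mul_one, Matrix.SpecialLinearGroup.coe_mk]
    exact h
  map_mul' X Y := by
    apply Subtype.ext
    have h : ((M⁻¹ : GL (Fin 2) R) : Matrix (Fin 2) (Fin 2) R) *
        (M : Matrix (Fin 2) (Fin 2) R) = 1 := by
      rw [← Units.val_mul, inv_mul_cancel, Units.val_one]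
    simp only [Matrix.SpecialLinearGroup.coe_mul, Matrix.SpecialLinearGroup.coe_mk]
    exact conj_mul_aux _ _ _ _ h

/-- The diagonal matrix `diag(u, 1)` as an element of `GL₂(R)`. -/
def diagU {R : Type*} [CommRing R] (u : Rˣ) : GL (Fin 2) R where
  val := !![(u : R), 0; 0, 1]
  inv := !![((u⁻¹ : Rˣ) : R), 0; 0, 1]
  val_inv := by
    ext i j
    fin_cases i <;> fin_cases j <;>
      simp [Matrix.mul_apply, Fin.sum_univ_two, Matrix.one_apply]
  inv_val := by
    ext i j
    fin_cases i <;> fin_cases j <;>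
      simp [Matrix.mul_apply, Fin.sum_univ_two, Matrix.one_apply]

/-- The diagonal matrix `diag(a, a⁻¹)` as an element of `SL₂(R)`. -/
def diagSL {R : Type*} [CommRing R] (a : Rˣ) : SL2 R :=
  ⟨!![(a : R), 0; 0, ((a⁻¹ : Rˣ) : R)], by
    rw [Matrix.det_fin_two_of]
    simp⟩

lemma mem_Gamma0 {A : Type*} [CommRing A] {I : Ideal A} {g : SL2 A} :
    g ∈ Gamma0 I ↔ (g : Matrix (Fin 2) (Fin 2) A) 1 0 ∈ I := Iff.rfl

lemma diagSL_comm {R : Type*} [CommRing R] (a b : Rˣ) :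
    diagSL a * diagSL b = diagSL b * diagSL a := by
  apply Subtype.ext
  show ((diagSL a : SL2 R) : Matrix (Fin 2) (Fin 2) R) * (diagSL b : SL2 R)
      = ((diagSL b : SL2 R) : Matrix (Fin 2) (Fin 2) R) * (diagSL a : SL2 R)
  unfold diagSL
  ext i j
  fin_cases i <;> fin_cases j <;>
    simp [Matrix.mul_apply, Fin.sum_univ_two] <;> ring

lemma diagSL_mem_Gamma0 {A : Type*} [CommRing A] (I : Ideal A) (a : Aˣ) :
    diagSL a ∈ Gamma0 I := by
  rw [mem_Gamma0]
  have h : ((diagSL a : SL2 A) : Matrix (Fin 2) (Fin 2) A) 1 0 = 0 := by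
    unfold diagSL; simp
  rw [h]; exact I.zero_mem

/-- The antidiagonal matrix `g_π = (0 -1; w 0)` as an element of `GL₂(F)`,
for a unit `w`. -/
def gpiU {F : Type*} [CommRing F] (w : Fˣ) : GL (Fin 2) F where
  val := !![0, -1; (w : F), 0]
  inv := !![0, ((w⁻¹ : Fˣ) : F); -1, 0]
  val_inv := by
    ext i j
    fin_cases i <;> fin_cases j <;>
      simp [Matrix.mul_apply, Fin.sum_univ_two, Matrix.one_apply]
  inv_val := by
    ext i j
    fin_cases i <;> fin_cases j <;>
      simp [Matrix.mul_apply, Fin.sum_univ_two, Matrix.one_apply]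

set_option synthInstance.maxHeartbeats 1000000

set_option linter.unusedSectionVars false
/-! ### Low-degree acyclicity of the complex of tuples in general position -/

/-- Exactness in degree one.  Points of `X` are in general position when their images under `r`
differ; if any three values of `r` can be avoided, the 1-cocycle condition on triples in
general position forces `θ` to be a coboundary. -/
lemma gp_exact_one {X P V : Type*} [AddCommGroup V] (r : X → P)
    (h : ∀ a b c : P, ∃ x, r x ≠ a ∧ r x ≠ b ∧ r x ≠ c) (θ : X → X → V)
    (hθ : ∀ x y z, r x ≠ r y → r x ≠ r z → r y ≠ r z → θ y z - θ x z + θ x y = 0) :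
    ∃ η : X → V, ∀ x y, r x ≠ r y → θ x y = η y - η x := by
  by_cases hX : Nonempty X
  swap
  · exact ⟨fun _ => 0, fun x => (hX ⟨x⟩).elim⟩
  obtain ⟨p⟩ := hX
  have hex : ∀ x : X, ∃ q, r q ≠ r p ∧ r q ≠ r x := fun x => by
    obtain ⟨q, h1, h2, -⟩ := h (r p) (r x) (r x)
    exact ⟨q, h1, h2⟩
  choose q hq1 hq2 using hex
  -- the potential `θ p q + θ q x` is independent of the auxiliary point `q`
  have ind' : ∀ x q q', r q ≠ r p → r q ≠ r x → r q' ≠ r p → r q' ≠ r x → r q ≠ r q' →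
      θ p q + θ q x = θ p q' + θ q' x := by
    intro x q q' h1 h2 h3 h4 h5
    have e1 := hθ p q q' h1.symm h3.symm h5
    have e2 := hθ q q' x h5 h2 h4
    linear_combination (norm := abel) e1 - e2
  have ind : ∀ x q q', r q ≠ r p → r q ≠ r x → r q' ≠ r p → r q' ≠ r x →
      θ p q + θ q x = θ p q' + θ q' x := by
    intro x q q' h1 h2 h3 h4
    by_cases h5 : r q = r q'
    · obtain ⟨s, s1, s2, s3⟩ := h (r p) (r x) (r q)
      rw [ind' x q s h1 h2 s1 s2 s3.symm, ind' x q' s h3 h4 s1 s2 (h5 ▸ s3.symm)]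
    · exact ind' x q q' h1 h2 h3 h4 h5
  refine ⟨fun x => θ p (q x) + θ (q x) x, fun x y hxy => ?_⟩
  obtain ⟨s, s1, s2, s3⟩ := h (r p) (r x) (r y)
  have e1 := ind x (q x) s (hq1 x) (hq2 x) s1 s2
  have e2 := ind y (q y) s (hq1 y) (hq2 y) s1 s3
  have e3 := hθ s x y s2 s3 hxy
  dsimp only
  linear_combination (norm := abel) e3 + e1 - e2

/-- Exactness in degree two, when any four values of `r` can be avoided.  Fix a point `p`.  On pairs
of points in general position to `p` the primitive is the cone `T p x y`; for a point `z` with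
`r z = r p` its values on pairs containing `z` come from exactness in degree one on the complement
of the class of `p`, where still three values of `r` can be avoided. -/
lemma gp_exact_two {X P V : Type*} [AddCommGroup V] (r : X → P)
    (h : ∀ a b c d : P, ∃ x, r x ≠ a ∧ r x ≠ b ∧ r x ≠ c ∧ r x ≠ d) (T : X → X → X → V)
    (hT : ∀ x y z w, r x ≠ r y → r x ≠ r z → r x ≠ r w → r y ≠ r z → r y ≠ r w → r z ≠ r w →
      T y z w - T x z w + T x y w - T x y z = 0) :
    ∃ φ : X → X → V, ∀ x y z, r x ≠ r y → r x ≠ r z → r y ≠ r z →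
      φ y z - φ x z + φ x y = T x y z := by
  classical
  by_cases hX : Nonempty X
  swap
  · exact ⟨fun _ _ => 0, fun x => (hX ⟨x⟩).elim⟩
  obtain ⟨p⟩ := hX
  have hY : ∀ a b c : P, ∃ x : {x : X // r x ≠ r p},
      r x.1 ≠ a ∧ r x.1 ≠ b ∧ r x.1 ≠ c := by
    intro a b c
    obtain ⟨x, h1, h2, h3, h4⟩ := h (r p) a b c
    exact ⟨⟨x, h1⟩, h2, h3, h4⟩
  -- the two families of values on pairs `(z, y)` and `(y, z)`
  have key : ∀ z : X, ∃ ψ ψ' : {x : X // r x ≠ r p} → V, r z = r p →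
      (∀ y y', r y.1 ≠ r y'.1 → T p y.1 y'.1 - T z y.1 y'.1 = ψ y' - ψ y) ∧
      (∀ y y', r y.1 ≠ r y'.1 → T p y.1 y'.1 - T y.1 y'.1 z = ψ' y - ψ' y') ∧
      (∀ y y', r y.1 ≠ r y'.1 → T y.1 z y'.1 + T p y.1 y'.1 = ψ y' + ψ' y) := by
    intro z
    by_cases hz : r z = r p
    swap
    · exact ⟨fun _ => 0, fun _ => 0, fun h => (hz h).elim⟩
    have zne : ∀ y : {x : X // r x ≠ r p}, r y.1 ≠ r z := fun y h => y.2 (h.trans hz)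
    obtain ⟨ψ, hψ⟩ := gp_exact_one (fun x : {x : X // r x ≠ r p} => r x.1) hY
      (fun y y' => T p y.1 y'.1 - T z y.1 y'.1) (by
        intro a b c h1 h2 h3
        have e1 := hT p a b c a.2.symm b.2.symm c.2.symm h1 h2 h3
        have e2 := hT z a b c (zne a).symm (zne b).symm (zne c).symm h1 h2 h3
        linear_combination (norm := abel) e2 - e1)
    obtain ⟨ψ', hψ'⟩ := gp_exact_one (fun x : {x : X // r x ≠ r p} => r x.1) hY
      (fun y y' => T y.1 y'.1 z - T p y.1 y'.1) (by
        intro a b c h1 h2 h3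
        have e1 := hT p a b c a.2.symm b.2.symm c.2.symm h1 h2 h3
        have e2 := hT a b c z h1 h2 (zne a) h3 (zne b) (zne c)
        linear_combination (norm := abel) e1 + e2)
    -- the defect in the mixed relation is a constant
    set E : {x : X // r x ≠ r p} → {x : X // r x ≠ r p} → V :=
      fun y y' => T y.1 z y'.1 + T p y.1 y'.1 - ψ y' - ψ' y with hE
    have E1' : ∀ y a b, r y.1 ≠ r a.1 → r y.1 ≠ r b.1 → r a.1 ≠ r b.1 → E y a = E y b := by
      intro y a b h1 h2 h3
      have e1 := hT p y a b y.2.symm a.2.symm b.2.symm h1 h2 h3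
      have e2 := hT y z a b (zne y) h1 h2 (zne a).symm (zne b).symm h3
      have e3 := hψ a b h3
      simp only [hE]
      linear_combination (norm := abel) -e3 - e1 - e2
    have E1 : ∀ y a b, r y.1 ≠ r a.1 → r y.1 ≠ r b.1 → E y a = E y b := by
      intro y a b h1 h2
      obtain ⟨s, s1, s2, s3⟩ := hY (r y.1) (r a.1) (r b.1)
      rw [E1' y a s h1 s1.symm s2.symm, E1' y b s h2 s1.symm s3.symm]
    have E2' : ∀ y a b, r y.1 ≠ r a.1 → r y.1 ≠ r b.1 → r a.1 ≠ r b.1 → E a y = E b y := by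
      intro y a b h1 h2 h3
      have e1 := hT p a b y a.2.symm b.2.symm y.2.symm h3 h1.symm h2.symm
      have e2 := hT a b z y h3 (zne a) h1.symm (zne b) h2.symm (zne y).symm
      have e3 := hψ' a b h3
      simp only [hE]
      linear_combination (norm := abel) e1 - e2 - e3
    have E2 : ∀ y a b, r y.1 ≠ r a.1 → r y.1 ≠ r b.1 → E a y = E b y := by
      intro y a b h1 h2
      obtain ⟨s, s1, s2, s3⟩ := hY (r y.1) (r a.1) (r b.1)
      rw [E2' y a s h1 s1.symm s2.symm, E2' y b s h2 s1.symm s3.symm]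
    obtain ⟨y0, -⟩ := hY (r p) (r p) (r p)
    obtain ⟨y1, h01, -⟩ := hY (r y0.1) (r p) (r p)
    refine ⟨ψ, fun y => ψ' y + E y0 y1, fun _ => ⟨hψ, ?_, ?_⟩⟩
    · intro y y' hy
      dsimp only
      linear_combination (norm := abel) -hψ' y y' hy
    · intro y y' hy
      obtain ⟨s, s1, s2, -⟩ := hY (r y.1) (r y0.1) (r p)
      have : E y y' = E y0 y1 := by
        rw [E1 y y' s hy s1.symm, E2 s y y0 s1 s2, E1 y0 s y1 s2.symm h01.symm]
      simp only [hE] at this ⊢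
      linear_combination (norm := abel) this
  choose ψ ψ' hψ using key
  refine ⟨fun x y => if hx : r x = r p then (if hy : r y = r p then 0 else ψ x ⟨y, hy⟩)
    else (if hy : r y = r p then ψ' y ⟨x, hx⟩ else T p x y), fun x y z h1 h2 h3 => ?_⟩
  by_cases hx : r x = r p
  · have hy : r y ≠ r p := hx ▸ h1.symm
    have hz : r z ≠ r p := hx ▸ h2.symm
    have := (hψ x hx).1 ⟨y, hy⟩ ⟨z, hz⟩ h3
    simp only [hx, hy, hz, dite_true, dite_false]
    linear_combination (norm := abel) this
  by_cases hy : r y = r p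
  · have hz : r z ≠ r p := hy ▸ h3.symm
    have := (hψ y hy).2.2 ⟨x, hx⟩ ⟨z, hz⟩ h2
    simp only [hx, hy, hz, dite_true, dite_false]
    linear_combination (norm := abel) -this
  by_cases hz : r z = r p
  · have := (hψ z hz).2.1 ⟨x, hx⟩ ⟨y, hy⟩ h1
    simp only [hx, hy, hz, dite_true, dite_false]
    linear_combination (norm := abel) this
  · have := hT p x y z (Ne.symm hx) (Ne.symm hy) (Ne.symm hz) h1 h2 h3
    simp only [hx, hy, hz, dite_false]
    linear_combination (norm := abel) -this

/-! ### Transgression of invariant cocycles on triples to group cocycles -/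

/-- A notion of general position on the `G`-set `X`, where `x` and `y` are in general position when
`r x ≠ r y`: it is `G`-invariant, and any four values of `r` can be avoided. -/
structure GPSet (G X P : Type*) [Group G] [MulAction G X] (r : X → P) : Prop where
  smul_ne : ∀ (γ : G) (x y : X), r x ≠ r y → r (γ • x) ≠ r (γ • y)
  avoid : ∀ a b c d : P, ∃ x, r x ≠ a ∧ r x ≠ b ∧ r x ≠ c ∧ r x ≠ d

/-- A transgression datum: a 1-cochain `φ` on pairs of points in general position whose translates
differ from `φ` by coboundaries `∂(η γ)`, and the group 2-cocycle `c` which measures the failure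
of `η` to be a 1-cocycle of `G` in the functions on `X`. -/
structure Transgr {G X P V : Type*} [Group G] [MulAction G X] [AddCommGroup V] (r : X → P)
    (φ : X → X → V) (η : G → X → V) (c : G → G → V) : Prop where
  diff : ∀ γ x y, r x ≠ r y → φ (γ • x) (γ • y) - φ x y = η γ y - η γ x
  coc : ∀ γ δ x, c γ δ = η γ (δ • x) + η δ x - η (γ * δ) x

section
variable {G X P V W : Type*} [Group G] [MulAction G X] [AddCommGroup V] [AddCommGroup W]
  {r : X → P}

lemma GPSet.avoid3 (H : GPSet G X P r) (a b c : P) :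
    ∃ x, r x ≠ a ∧ r x ≠ b ∧ r x ≠ c := by
  obtain ⟨x, h1, h2, h3, -⟩ := H.avoid a b c c
  exact ⟨x, h1, h2, h3⟩

lemma GPSet.const (H : GPSet G X P r) (η : X → V) (h : ∀ x y, r x ≠ r y → η x = η y) (x y : X) :
    η x = η y := by
  obtain ⟨z, h1, h2, -⟩ := H.avoid3 (r x) (r y) (r y)
  rw [← h z x h1, h z y h2]

lemma Transgr.map {φ : X → X → V} {η : G → X → V} {c : G → G → V} (t : Transgr r φ η c)
    (f : V →+ W) : Transgr r (fun x y => f (φ x y)) (fun γ x => f (η γ x))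
      (fun γ δ => f (c γ δ)) where
  diff γ x y h := by simp only [← map_sub, t.diff γ x y h]
  coc γ δ x := by simp only [← map_sub, ← map_add, t.coc γ δ x]

/-- Every primitive `φ` of an invariant cocycle on triples has a transgression, normalized to
vanish at the base point. -/
lemma GPSet.exists_transgr (H : GPSet G X P r) (o : X) (φ : X → X → V)
    (hinv : ∀ (γ : G) x y z, r x ≠ r y → r x ≠ r z → r y ≠ r z →
      φ (γ • y) (γ • z) - φ (γ • x) (γ • z) + φ (γ • x) (γ • y) = φ y z - φ x z + φ x y) :
    ∃ (η : G → X → V) (c : G → G → V), Transgr r φ η c ∧ ∀ γ, η γ o = 0 := by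
  have h1 : ∀ γ : G, ∃ η : X → V, ∀ x y, r x ≠ r y →
      φ (γ • x) (γ • y) - φ x y = η y - η x := by
    intro γ
    refine gp_exact_one r H.avoid3 (fun x y => φ (γ • x) (γ • y) - φ x y) ?_
    intro x y z hxy hxz hyz
    try dsimp only
    linear_combination (norm := abel) hinv γ x y z hxy hxz hyz
  choose η hη using h1
  refine ⟨fun γ x => η γ x - η γ o, fun γ δ => η γ (δ • o) - η γ o, ⟨?_, ?_⟩, by simp⟩
  · intro γ x y h
    rw [hη γ x y h]; abel
  · intro γ δ x
    have := H.const (fun x => η γ (δ • x) + η δ x - η (γ * δ) x) (by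
      intro x y h
      have e1 := hη γ _ _ (H.smul_ne δ x y h)
      have e2 := hη δ x y h
      have e3 := hη (γ * δ) x y h
      rw [mul_smul, mul_smul] at e3
      try dsimp only
      linear_combination (norm := abel) -e3 + e1 + e2) x o
    try dsimp only at this ⊢
    linear_combination (norm := abel) -this

/-- The cohomology class of the transgression depends only on the cocycle on triples. -/
lemma GPSet.compare (H : GPSet G X P r) (o : X) {φ φ' : X → X → V} {η η' : G → X → V}
    {c c' : G → G → V} (t : Transgr r φ η c) (t' : Transgr r φ' η' c')
    (h : ∀ x y z, r x ≠ r y → r x ≠ r z → r y ≠ r z →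
      φ y z - φ x z + φ x y = φ' y z - φ' x z + φ' x y) :
    ∃ e : G → V, ∀ γ δ, c γ δ = c' γ δ + (e γ + e δ - e (γ * δ)) := by
  obtain ⟨ν, hν⟩ := gp_exact_one r H.avoid3 (fun x y => φ x y - φ' x y) (by
    intro x y z h1 h2 h3
    try dsimp only
    linear_combination (norm := abel) h x y z h1 h2 h3)
  have hc : ∀ γ x, η γ x - η' γ x - ν (γ • x) + ν x = η γ o - η' γ o - ν (γ • o) + ν o := by
    intro γ x
    refine H.const (fun x => η γ x - η' γ x - ν (γ • x) + ν x) ?_ x o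
    intro x y hxy
    have e1 := t.diff γ x y hxy
    have e2 := t'.diff γ x y hxy
    have e3 := hν x y hxy
    have e4 := hν _ _ (H.smul_ne γ x y hxy)
    try dsimp only at e3 e4 ⊢
    linear_combination (norm := abel) e1 - e2 + e3 - e4
  refine ⟨fun γ => η γ o - η' γ o - ν (γ • o) + ν o, fun γ δ => ?_⟩
  try dsimp only
  rw [t.coc γ δ o, t'.coc γ δ o]
  have e := hc γ (δ • o)
  rw [mul_smul]
  linear_combination (norm := abel) e
end

/-! ### Group 2-cocycles and the bar complex -/

section
open GroupHomology
variable {G V : Type*} [Group G] [AddCommGroup V]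

lemma dfun_two (a b : G) : dfun ℤ G ![a, b] =
    Finsupp.single ![b] 1 - Finsupp.single ![a * b] 1 + Finsupp.single ![a] 1 := by
  have f0 : face 0 ![a, b] = ![b] := by
    funext m; fin_cases m; simp [face]
  have f1 : face 1 ![a, b] = ![a * b] := by
    funext m; fin_cases m; simp [face]
  have f2 : face 2 ![a, b] = ![a] := by
    funext m; fin_cases m; simp [face]
  unfold dfun
  rw [show (1 : ℕ) + 2 = 3 from rfl, Finset.sum_range_succ, Finset.sum_range_succ,
    Finset.sum_range_one, f0, f1, f2]
  simp only [pow_zero, pow_one, one_smul]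
  module

lemma dfun_three (a b c : G) : dfun ℤ G ![a, b, c] =
    Finsupp.single ![b, c] 1 - Finsupp.single ![a * b, c] 1 + Finsupp.single ![a, b * c] 1
      - Finsupp.single ![a, b] 1 := by
  have f0 : face 0 ![a, b, c] = ![b, c] := by
    funext m; fin_cases m <;> simp [face]
  have f1 : face 1 ![a, b, c] = ![a * b, c] := by
    funext m; fin_cases m <;> simp [face]
  have f2 : face 2 ![a, b, c] = ![a, b * c] := by
    funext m; fin_cases m <;> simp [face]
  have f3 : face 3 ![a, b, c] = ![a, b] := by
    funext m; fin_cases m <;> simp [face]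
  unfold dfun
  rw [show (2 : ℕ) + 2 = 4 from rfl, Finset.sum_range_succ, Finset.sum_range_succ,
    Finset.sum_range_succ, Finset.sum_range_one, f0, f1, f2, f3]
  simp only [pow_zero, pow_one, one_smul]
  module

/-- The evaluation of a function of two group elements on 2-chains. -/
def evCh (c : G → G → V) : Ch ℤ G 2 →ₗ[ℤ] V :=
  Finsupp.linearCombination ℤ (fun g => c (g 0) (g 1))

@[simp] lemma evCh_single (c : G → G → V) (a b : G) :
    evCh c (Finsupp.single ![a, b] 1) = c a b := by
  simp [evCh]

lemma eta_two (g : Fin 2 → G) : g = ![g 0, g 1] := by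
  funext i; fin_cases i <;> rfl

lemma eta_three (g : Fin 3 → G) : g = ![g 0, g 1, g 2] := by
  funext i; fin_cases i <;> rfl

/-- A group 2-cocycle kills the boundaries. -/
lemma evCh_boundary (c : G → G → V)
    (hc : ∀ a b d, c b d - c (a * b) d + c a (b * d) - c a b = 0) (y : Ch ℤ G 3) :
    evCh c (dd ℤ G 2 y) = 0 := by
  have : (evCh c) ∘ₗ (dd ℤ G 2) = 0 := by
    refine Finsupp.lhom_ext' (fun g => LinearMap.ext_ring ?_)
    simp only [LinearMap.comp_apply, Finsupp.lsingle_apply]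
    rw [dd_single, eta_three g, dfun_three]
    simp [hc]
  exact DFunLike.congr_fun this y

/-- Conversely a linear form which kills the boundaries is given by a cocycle. -/
lemma cocycle_of_linear (f : Ch ℤ G 2 →ₗ[ℤ] V) (hf : ∀ y, f (dd ℤ G 2 y) = 0) (a b d : G) :
    f (Finsupp.single ![b, d] 1) - f (Finsupp.single ![a * b, d] 1)
      + f (Finsupp.single ![a, b * d] 1) - f (Finsupp.single ![a, b] 1) = 0 := by
  have := hf (Finsupp.single ![a, b, d] 1)
  rwa [dd_single, dfun_three, map_sub, map_add, map_sub] at this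

lemma linear_eq_evCh (f : Ch ℤ G 2 →ₗ[ℤ] V) :
    f = evCh (fun a b => f (Finsupp.single ![a, b] 1)) := by
  refine Finsupp.lhom_ext' (fun g => LinearMap.ext_ring ?_)
  simp only [LinearMap.comp_apply, Finsupp.lsingle_apply]
  rw [eta_two g, evCh_single]

/-- Cohomologous cocycles have the same values on cycles. -/
lemma evCh_congr_cycles {c c' : G → G → V} {e : G → V}
    (h : ∀ γ δ, c γ δ = c' γ δ + (e γ + e δ - e (γ * δ))) {z : Ch ℤ G 2}
    (hz : z ∈ cycles ℤ G 2) : evCh c z = evCh c' z := by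
  have : evCh c = evCh c' +
      (Finsupp.linearCombination ℤ (fun g : Fin 1 → G => e (g 0))) ∘ₗ (dd ℤ G 1) := by
    refine Finsupp.lhom_ext' (fun g => LinearMap.ext_ring ?_)
    simp only [LinearMap.comp_apply, Finsupp.lsingle_apply, LinearMap.add_apply]
    rw [dd_single, eta_two g, dfun_two]
    simp [h]
    abel
  rw [this, LinearMap.add_apply, LinearMap.comp_apply, (show dd ℤ G 1 z = 0 from hz)]
  simp

lemma evCh_map {W : Type*} [AddCommGroup W] (f : V →+ W) (c : G → G → V) (z : Ch ℤ G 2) :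
    evCh (fun a b => f (c a b)) z = f (evCh c z) := by
  have : evCh (fun a b => f (c a b)) = f.toIntLinearMap ∘ₗ evCh c := by
    refine Finsupp.lhom_ext' (fun g => LinearMap.ext_ring ?_)
    simp only [LinearMap.comp_apply, Finsupp.lsingle_apply]
    rw [eta_two g]
    simp
  rw [this]; rfl

lemma Transgr.cocycle {X P : Type*} [MulAction G X] {r : X → P} {φ : X → X → V} {η : G → X → V}
    {c : G → G → V} (t : Transgr r φ η c) (o : X) (a b d : G) :
    c b d - c (a * b) d + c a (b * d) - c a b = 0 := by
  rw [t.coc b d o, t.coc (a * b) d o, t.coc a (b * d) o, t.coc a b (d • o), mul_smul, mul_assoc]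
  abel

end

/-! ### Characters with values in `ℚ / ℤ` -/

/-- The divisible group `ℚ / ℤ`. -/
abbrev QZ : Type := AddCircle (1 : ℚ)

lemma exists_char_extend {M N : Type*} [AddCommGroup M] [AddCommGroup N] (p : M →+ N) (f : M →+ QZ)
    (h : ∀ m, p m = 0 → f m = 0) : ∃ g : N →+ QZ, ∀ m, g (p m) = f m := by
  let pb : M ⧸ p.ker →+ N := QuotientAddGroup.kerLift p
  have hpb : Function.Injective pb := QuotientAddGroup.kerLift_injective p
  let fb : M ⧸ p.ker →+ QZ := QuotientAddGroup.lift p.ker f (fun m hm => h m hm)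
  obtain ⟨g, hg⟩ := CharacterModule.dual_surjective_of_injective (R := ℤ) pb.toIntLinearMap hpb fb
  refine ⟨g, fun m => ?_⟩
  exact DFunLike.congr_fun hg (QuotientAddGroup.mk m : M ⧸ p.ker)

lemma exists_char_separate {M : Type*} [AddCommGroup M] (S : AddSubgroup M) (x : M)
    (h : ∀ f : M →+ QZ, (∀ s ∈ S, f s = 0) → f x = 0) : x ∈ S := by
  rw [← QuotientAddGroup.eq_zero_iff]
  refine CharacterModule.eq_zero_of_character_apply (A := M ⧸ S) fun c => ?_
  let c' : M ⧸ S →+ QZ := c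
  refine h (c'.comp (QuotientAddGroup.mk' S)) fun s hs => ?_
  simp only [AddMonoidHom.comp_apply, QuotientAddGroup.mk'_apply]
  rw [(QuotientAddGroup.eq_zero_iff s).2 hs, map_zero]

/-- The multiplicative form of `exists_char_extend`. -/
lemma exists_char_extend_mul {M N : Type*} [CommGroup M] [CommGroup N] (p : M →* N) (f : M → QZ)
    (hf : ∀ a b, f (a * b) = f a + f b)
    (h : ∀ m, p m = 1 → f m = 0) :
    ∃ g : N → QZ, (∀ a b, g (a * b) = g a + g b) ∧ ∀ m, g (p m) = f m := by
  let f' : Additive M →+ QZ := AddMonoidHom.mk' (fun a => f a.toMul) (fun a b => hf _ _)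
  obtain ⟨g, hg⟩ := exists_char_extend (MonoidHom.toAdditive p) f' (fun m hm => h _ hm)
  exact ⟨fun a => g (Additive.ofMul a), fun a b => g.map_add _ _, fun m => hg (Additive.ofMul m)⟩

/-! ### Matrices in `SL₂` -/

section
variable {A : Type*} [CommRing A]

/-- The matrix `(a b; c d)` of determinant one. -/
def slm (a b c d : A) (h : a * d - b * c = 1) : SL2 A :=
  ⟨!![a, b; c, d], by rw [Matrix.det_fin_two_of, h]⟩

/-- The elementary matrix `(1 t; 0 1)`. -/
def E12 (t : A) : SL2 A := slm 1 t 0 1 (by ring)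

/-- The elementary matrix `(1 0; t 1)`. -/
def E21 (t : A) : SL2 A := slm 1 0 t 1 (by ring)

/-- The Weyl element `(0 -1; 1 0)`. -/
def wey : SL2 A := slm 0 (-1) 1 0 (by ring)

@[simp] lemma slm_00 (a b c d : A) (h) : (slm a b c d h).1 0 0 = a := rfl
@[simp] lemma slm_01 (a b c d : A) (h) : (slm a b c d h).1 0 1 = b := rfl
@[simp] lemma slm_10 (a b c d : A) (h) : (slm a b c d h).1 1 0 = c := rfl
@[simp] lemma slm_11 (a b c d : A) (h) : (slm a b c d h).1 1 1 = d := rfl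

lemma sl_mul (g h : SL2 A) (i j : Fin 2) :
    (g * h).1 i j = g.1 i 0 * h.1 0 j + g.1 i 1 * h.1 1 j := by
  rw [← Fin.sum_univ_two (fun k => g.1 i k * h.1 k j), ← Matrix.mul_apply]; rfl

lemma sl_inv_00 (g : SL2 A) : (g⁻¹).1 0 0 = g.1 1 1 := by
  rw [Matrix.SpecialLinearGroup.coe_inv, Matrix.adjugate_fin_two]; rfl
lemma sl_inv_01 (g : SL2 A) : (g⁻¹).1 0 1 = -g.1 0 1 := by
  rw [Matrix.SpecialLinearGroup.coe_inv, Matrix.adjugate_fin_two]; rfl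
lemma sl_inv_10 (g : SL2 A) : (g⁻¹).1 1 0 = -g.1 1 0 := by
  rw [Matrix.SpecialLinearGroup.coe_inv, Matrix.adjugate_fin_two]; rfl
lemma sl_inv_11 (g : SL2 A) : (g⁻¹).1 1 1 = g.1 0 0 := by
  rw [Matrix.SpecialLinearGroup.coe_inv, Matrix.adjugate_fin_two]; rfl

lemma sl_det (g : SL2 A) : g.1 0 0 * g.1 1 1 - g.1 0 1 * g.1 1 0 = 1 := by
  rw [← Matrix.det_fin_two, g.2]

lemma sl_ext {g h : SL2 A} (h0 : g.1 0 0 = h.1 0 0) (h1 : g.1 0 1 = h.1 0 1)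
    (h2 : g.1 1 0 = h.1 1 0) (h3 : g.1 1 1 = h.1 1 1) : g = h := by
  apply Subtype.ext
  ext i j
  fin_cases i <;> fin_cases j
  exacts [h0, h1, h2, h3]

@[simp] lemma diagSL_00 (a : Aˣ) : (diagSL a).1 0 0 = a := rfl
@[simp] lemma diagSL_01 (a : Aˣ) : (diagSL a).1 0 1 = 0 := rfl
@[simp] lemma diagSL_10 (a : Aˣ) : (diagSL a).1 1 0 = 0 := rfl
@[simp] lemma diagSL_11 (a : Aˣ) : (diagSL a).1 1 1 = ((a⁻¹ : Aˣ) : A) := rfl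

@[simp] lemma sl_one_00 : (1 : SL2 A).1 0 0 = 1 := rfl
@[simp] lemma sl_one_01 : (1 : SL2 A).1 0 1 = 0 := rfl
@[simp] lemma sl_one_10 : (1 : SL2 A).1 1 0 = 0 := rfl
@[simp] lemma sl_one_11 : (1 : SL2 A).1 1 1 = 1 := rfl

/-- The determinant of the first columns of two matrices, i.e. the lower left entry
of `g⁻¹ * h`. -/
def cdet (g h : SL2 A) : A := g.1 0 0 * h.1 1 0 - g.1 1 0 * h.1 0 0

lemma cdet_eq (g h : SL2 A) : (g⁻¹ * h).1 1 0 = cdet g h := by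
  rw [sl_mul, sl_inv_10, sl_inv_11, cdet]; ring

lemma cdet_mul (γ g h : SL2 A) : cdet (γ * g) (γ * h) = cdet g h := by
  rw [← cdet_eq, ← cdet_eq, mul_inv_rev, mul_assoc, inv_mul_cancel_left]

/-- The Plücker relation. -/
lemma cdet_plucker (g h k l : SL2 A) :
    cdet g h * cdet k l + cdet g l * cdet h k = cdet g k * cdet h l := by
  simp only [cdet]; ring

lemma diagSL_mul (a b : Aˣ) : diagSL (a * b) = diagSL a * diagSL b := by
  apply sl_ext <;> simp [sl_mul, mul_comm]

lemma E12_add (s t : A) : E12 (s + t) = E12 s * E12 t := by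
  apply sl_ext <;> simp [sl_mul, E12, add_comm]

lemma E21_add (s t : A) : E21 (s + t) = E21 s * E21 t := by
  apply sl_ext <;> simp [sl_mul, E21]

lemma diagSL_conj_E12 (u : Aˣ) (t : A) :
    E12 ((u : A) ^ 2 * t) * diagSL u = diagSL u * E12 t := by
  apply sl_ext <;> simp [sl_mul, E12]
  linear_combination (u * t) * u.mul_inv

lemma diagSL_conj_E21 (u : Aˣ) (t : A) :
    diagSL u * E21 ((u : A) ^ 2 * t) = E21 t * diagSL u := by
  apply sl_ext <;> simp [sl_mul, E21]
  linear_combination (u * t) * u.mul_inv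

/-- A matrix whose upper left entry is a unit is a product of elementary and diagonal ones. -/
lemma sl_decomp (g : SL2 A) (a : Aˣ) (h : g.1 0 0 = a) :
    g = E21 (g.1 1 0 * (a⁻¹ : Aˣ)) * diagSL a * E12 ((a⁻¹ : Aˣ) * g.1 0 1) := by
  have hd := sl_det g
  rw [h] at hd
  have hu := a.mul_inv
  apply sl_ext <;> simp [sl_mul, E12, E21, h]
  linear_combination ((a⁻¹ : Aˣ) : A) * hd + (- g.1 1 1) * hu

/-! ### Additive functions on subgroups of `SL₂` -/

lemma add_one_eq_zero {G V : Type*} [Group G] [AddCommGroup V] (H : Subgroup G) (f : G → V)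
    (hf : ∀ x ∈ H, ∀ y ∈ H, f (x * y) = f x + f y) : f 1 = 0 := by
  have := hf 1 H.one_mem 1 H.one_mem
  simpa using this

lemma add_inv_eq_neg {G V : Type*} [Group G] [AddCommGroup V] (H : Subgroup G) (f : G → V)
    (hf : ∀ x ∈ H, ∀ y ∈ H, f (x * y) = f x + f y) {x : G} (hx : x ∈ H) : f x⁻¹ = - f x := by
  have := hf x hx x⁻¹ (H.inv_mem hx)
  rw [mul_inv_cancel, add_one_eq_zero H f hf] at this
  exact (neg_eq_of_add_eq_zero_right this.symm).symm

/-- If `u` and `u² - 1` are units then `E12 ((u² - 1) * j)` is the commutator of `diagSL u`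
and `E12 j`, hence additive functions vanish on it. -/
lemma add_E12 {V : Type*} [AddCommGroup V] (u : Aˣ) (hu : IsUnit ((u : A) ^ 2 - 1))
    (H : Subgroup (SL2 A)) (f : SL2 A → V) (hf : ∀ x ∈ H, ∀ y ∈ H, f (x * y) = f x + f y)
    (hD : diagSL u ∈ H) (J : Ideal A) (hJ : ∀ j ∈ J, E12 j ∈ H) (j : A) (hj : j ∈ J) :
    f (E12 j) = 0 := by
  obtain ⟨v, hv⟩ := hu
  set t : A := (v⁻¹ : Aˣ) * j
  have ht : t ∈ J := J.mul_mem_left _ hj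
  have hjt : j + t = (u : A) ^ 2 * t := by
    have h1 : (v : A) * t = j := by simp [t]
    rw [hv] at h1
    linear_combination -h1
  have e1 := diagSL_conj_E12 u t
  have e2 := congrArg f e1
  rw [hf _ (hJ _ (J.mul_mem_left _ ht)) _ hD, hf _ hD _ (hJ _ ht), ← hjt, E12_add,
    hf _ (hJ _ hj) _ (hJ _ ht)] at e2
  linear_combination (norm := abel) e2

lemma add_E21 {V : Type*} [AddCommGroup V] (u : Aˣ) (hu : IsUnit ((u : A) ^ 2 - 1))
    (H : Subgroup (SL2 A)) (f : SL2 A → V) (hf : ∀ x ∈ H, ∀ y ∈ H, f (x * y) = f x + f y)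
    (hD : diagSL u ∈ H) (J : Ideal A) (hJ : ∀ j ∈ J, E21 j ∈ H) (j : A) (hj : j ∈ J) :
    f (E21 j) = 0 := by
  obtain ⟨v, hv⟩ := hu
  set t : A := (v⁻¹ : Aˣ) * j
  have ht : t ∈ J := J.mul_mem_left _ hj
  have hjt : j + t = (u : A) ^ 2 * t := by
    have h1 : (v : A) * t = j := by simp [t]
    rw [hv] at h1
    linear_combination -h1
  have e1 := diagSL_conj_E21 u t
  have e2 := congrArg f e1
  rw [hf _ hD _ (hJ _ (J.mul_mem_left _ ht)), hf _ (hJ _ ht) _ hD, ← hjt, E21_add,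
    hf _ (hJ _ hj) _ (hJ _ ht)] at e2
  linear_combination (norm := abel) e2
end

/-! ### The square classes in the Grothendieck–Witt ring -/

section
variable {R : Type*} [CommRing R]

/-- The class `⟨u⟩` in `GW(R)`. -/
def gw (u : Rˣ) : GWq ℤ R := Ideal.Quotient.mk (StRel ℤ R) (gcl ℤ u)

lemma sqc_mul (u v : Rˣ) : sqc (u * v) = sqc u * sqc v := rfl

lemma sqc_mul_sq (u v : Rˣ) : sqc (u * v ^ 2) = sqc u := by
  refine (QuotientGroup.eq (s := (powMonoidHom 2 : Rˣ →* Rˣ).range) |>.2 ?_).symm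
  exact ⟨v, by simp [powMonoidHom]⟩

lemma sqc_eq_iff {u v : Rˣ} (h : sqc u = sqc v) : ∃ t : Rˣ, v = u * t ^ 2 := by
  obtain ⟨t, ht⟩ := QuotientGroup.eq.1 h
  exact ⟨t, by rw [show t ^ 2 = u⁻¹ * v from ht]; group⟩

lemma gcl_mul (u v : Rˣ) : gcl ℤ (u * v) = gcl ℤ u * gcl ℤ v := by
  simp only [gcl, sqc_mul, map_mul]

lemma gw_mul (u v : Rˣ) : gw (u * v) = gw u * gw v := by
  simp only [gw, gcl_mul, map_mul]

lemma gw_congr {u v : Rˣ} (h : sqc u = sqc v) : gw u = gw v := by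
  simp only [gw, gcl, h]

lemma gw_mul_sq (u v : Rˣ) : gw (u * v ^ 2) = gw u := gw_congr (sqc_mul_sq u v)

lemma gw_one : gw (1 : Rˣ) = 1 := by
  have : sqc (1 : Rˣ) = 1 := rfl
  rw [gw, gcl, this, map_one, map_one]

lemma gw_steinberg (a b : Rˣ) (h : (a : R) + b = 1) : (gw a - 1) * (gw b - 1) = 0 := by
  have hb : (1 : R) - a = b := by rw [← h]; ring
  have h1 : IsUnit ((1 : R) - a) := hb ▸ b.isUnit
  have h2 : WU.usub ⟨a, h1⟩ = b := Units.ext ((WU.usub_coe (R := R) ⟨a, h1⟩).trans hb)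
  have : gcc ℤ a * gcc ℤ b ∈ StRel ℤ R :=
    Ideal.subset_span ⟨⟨a, h1⟩, by rw [h2]⟩
  rw [← Ideal.Quotient.eq_zero_iff_mem] at this
  simpa [gcc, gw] using this

/-- The four-term relation for the determinants of four vectors. -/
lemma gw_four (d01 d02 d03 d12 d13 d23 : Rˣ)
    (h : (d01 : R) * d23 + d03 * d12 = d02 * d13) :
    gw (d12 * d23 * d13) - gw (d02 * d23 * d03) + gw (d01 * d13 * d03)
      - gw (d01 * d12 * d02) = 0 := by
  obtain ⟨a, ha⟩ : ∃ a : Rˣ, d01 * d23 = a * (d02 * d13) := ⟨_, (inv_mul_cancel_right _ _).symm⟩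
  obtain ⟨b, hb⟩ : ∃ b : Rˣ, d03 * d12 = b * (d02 * d13) := ⟨_, (inv_mul_cancel_right _ _).symm⟩
  obtain ⟨c, hc⟩ : ∃ c : Rˣ, c = d01 * d12 * d02 := ⟨_, rfl⟩
  have ha' := congrArg Units.val ha
  have hb' := congrArg Units.val hb
  push_cast at ha' hb'
  have hab : (a : R) + b = 1 := by
    have h0 : ((a : R) + b) * (d02 * d13 : Rˣ) = 1 * (d02 * d13 : Rˣ) := by
      push_cast
      linear_combination h - ha' - hb'
    exact (Units.mul_left_inj _).1 h0
  have h1 : gw (d12 * d23 * d13) = gw (c * a) := by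
    rw [← gw_mul_sq (d12 * d23 * d13) d01, ← gw_mul_sq (c * a) d13]
    congr 1; ext; rw [hc]; push_cast
    linear_combination ((d12 : R) * d13 * d01) * ha'
  have h2 : gw (d02 * d23 * d03) = gw (c * a * b) := by
    rw [← gw_mul_sq (d02 * d23 * d03) (d01 * d12), ← gw_mul_sq (c * a * b) (d02 * d13)]
    congr 1; ext; rw [hc]; push_cast
    linear_combination ((d02 : R) * d01 * d12 * d03 * d12) * ha' +
      ((d02 : R) * d01 * d12 * a * d02 * d13) * hb'
  have h3 : gw (d01 * d13 * d03) = gw (c * b) := by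
    rw [← gw_mul_sq (d01 * d13 * d03) d12, ← gw_mul_sq (c * b) d13]
    congr 1; ext; rw [hc]; push_cast
    linear_combination ((d12 : R) * d13 * d01) * hb'
  rw [← hc]
  have h4 := gw_steinberg a b hab
  rw [h1, h2, h3, gw_mul (c * a), gw_mul c a, gw_mul c b]
  linear_combination (-gw c) * h4
end

/-! ### The projective line of `A ⧸ I` as a homogeneous space -/

section
variable {A : Type*} [CommRing A] (I : Ideal A)

/-- The homogeneous space `SL₂(A) / Γ₀(I)`, which is the projective line of `A / I`; the point of
`g` is the class of the first column of `g`. -/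
abbrev PL : Type _ := SL2 A ⧸ Gamma0 I

/-- The point of the projective line given by a matrix. -/
def pt (g : SL2 A) : PL I := QuotientGroup.mk g

lemma pt_surj (x : PL I) : ∃ g, pt I g = x := QuotientGroup.mk_surjective x

lemma smul_pt (γ g : SL2 A) : γ • pt I g = pt I (γ * g) := rfl

lemma pt_out (x : PL I) : pt I x.out = x := Quotient.out_eq' x

lemma pt_eq_iff (g h : SL2 A) : pt I g = pt I h ↔ cdet g h ∈ I := by
  rw [pt, pt, QuotientGroup.eq, mem_Gamma0, ← cdet_eq]

lemma pt_mul {b : SL2 A} (hb : b ∈ Gamma0 I) (g : SL2 A) : pt I (g * b) = pt I g := by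
  rw [pt, pt, QuotientGroup.eq]
  simpa using (Gamma0 I).inv_mem hb

lemma out_pt_mem (g : SL2 A) : g⁻¹ * (pt I g).out ∈ Gamma0 I := by
  rw [← QuotientGroup.eq]; exact (pt_out I (pt I g)).symm

lemma gamma0_ent {b : SL2 A} (hb : b ∈ Gamma0 I) : Ideal.Quotient.mk I (b.1 1 0) = 0 :=
  Ideal.Quotient.eq_zero_iff_mem.2 hb

lemma gamma0_diag {b : SL2 A} (hb : b ∈ Gamma0 I) :
    Ideal.Quotient.mk I (b.1 0 0) * Ideal.Quotient.mk I (b.1 1 1) = 1 := by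
  have h := congrArg (Ideal.Quotient.mk I) (sl_det b)
  simpa [gamma0_ent I hb] using h

open Classical in
/-- The character `(a b; c d) ↦ a` of `Γ₀(I)` with values in the units of `A / I` (extended by
`1` outside of `Γ₀(I)`). -/
def lam (b : SL2 A) : (A ⧸ I)ˣ :=
  if hb : b ∈ Gamma0 I then
    ⟨Ideal.Quotient.mk I (b.1 0 0), Ideal.Quotient.mk I (b.1 1 1), gamma0_diag I hb,
      (mul_comm _ _).trans (gamma0_diag I hb)⟩
  else 1

lemma lam_coe {b : SL2 A} (hb : b ∈ Gamma0 I) :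
    (lam I b : A ⧸ I) = Ideal.Quotient.mk I (b.1 0 0) := by
  rw [lam, dif_pos hb]

lemma lam_inv_coe {b : SL2 A} (hb : b ∈ Gamma0 I) :
    (((lam I b)⁻¹ : (A ⧸ I)ˣ) : A ⧸ I) = Ideal.Quotient.mk I (b.1 1 1) := by
  rw [lam, dif_pos hb]; rfl

lemma lam_mul {b b' : SL2 A} (hb : b ∈ Gamma0 I) (hb' : b' ∈ Gamma0 I) :
    lam I (b * b') = lam I b * lam I b' := by
  ext
  rw [lam_coe I ((Gamma0 I).mul_mem hb hb'), Units.val_mul, lam_coe I hb, lam_coe I hb', sl_mul,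
    map_add, map_mul, map_mul, gamma0_ent I hb']
  ring

lemma lam_inv {b : SL2 A} (hb : b ∈ Gamma0 I) : lam I b⁻¹ = (lam I b)⁻¹ := by
  ext
  rw [lam_coe I ((Gamma0 I).inv_mem hb), lam_inv_coe I hb, sl_inv_00]

lemma lam_one : lam I (1 : SL2 A) = 1 := by
  ext
  rw [lam_coe I (Gamma0 I).one_mem]; simp

lemma cdet_mul_gamma0 {b b' : SL2 A} (hb : b ∈ Gamma0 I) (hb' : b' ∈ Gamma0 I) (g h : SL2 A) :
    Ideal.Quotient.mk I (cdet (g * b) (h * b')) =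
      lam I b * lam I b' * Ideal.Quotient.mk I (cdet g h) := by
  rw [lam_coe I hb, lam_coe I hb']
  simp only [cdet, sl_mul, map_sub, map_mul, map_add, gamma0_ent I hb, gamma0_ent I hb']
  ring

/-- The scalar comparing the first column of `g` with that of the chosen representative of its
point. -/
def kap (g : SL2 A) : (A ⧸ I)ˣ := lam I (g⁻¹ * (pt I g).out)

lemma kap_mul {b : SL2 A} (hb : b ∈ Gamma0 I) (g : SL2 A) :
    kap I (g * b) = (lam I b)⁻¹ * kap I g := by
  rw [kap, pt_mul I hb, mul_inv_rev, mul_assoc,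
    lam_mul I ((Gamma0 I).inv_mem hb) (out_pt_mem I g), lam_inv I hb, kap]

/-- The determinant of the chosen representatives of two points. -/
def dt (x y : PL I) : A ⧸ I := Ideal.Quotient.mk I (cdet x.out y.out)

lemma dt_pt (g h : SL2 A) :
    dt I (pt I g) (pt I h) = kap I g * kap I h * Ideal.Quotient.mk I (cdet g h) := by
  have := cdet_mul_gamma0 I (out_pt_mem I g) (out_pt_mem I h) g h
  rwa [mul_inv_cancel_left, mul_inv_cancel_left] at this

open Classical in
/-- The determinant of two points as a unit, when it is one (and `1` otherwise). -/
def dtu (x y : PL I) : (A ⧸ I)ˣ := if h : IsUnit (dt I x y) then h.unit else 1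

/-- The multiplier of `γ` at the point `x`, relative to the chosen representatives. -/
def lamx (γ : SL2 A) (x : PL I) : (A ⧸ I)ˣ := kap I x.out * (kap I (γ * x.out))⁻¹

lemma lamx_pt (γ g : SL2 A) : lamx I γ (pt I g) = kap I g * (kap I (γ * g))⁻¹ := by
  have h := out_pt_mem I g
  obtain ⟨b, hb⟩ : ∃ b, b = g⁻¹ * (pt I g).out := ⟨_, rfl⟩
  have hg : (pt I g).out = g * b := by rw [hb, mul_inv_cancel_left]
  rw [← hb] at h
  rw [lamx, hg, ← mul_assoc, kap_mul I h, kap_mul I h, mul_inv, inv_inv]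
  rw [mul_mul_mul_comm, inv_mul_cancel, one_mul]

lemma lamx_mul (γ δ : SL2 A) (x : PL I) : lamx I (γ * δ) x = lamx I γ (δ • x) * lamx I δ x := by
  obtain ⟨g, rfl⟩ := pt_surj I x
  rw [smul_pt, lamx_pt, lamx_pt, lamx_pt, mul_assoc γ]
  rw [mul_comm (kap I (δ * g) * _), mul_assoc (kap I g), inv_mul_cancel_left]

lemma lamx_one (b : SL2 A) (hb : b ∈ Gamma0 I) : lamx I b (pt I 1) = lam I b := by
  have : b * 1 = 1 * b := by simp
  rw [lamx_pt, this, kap_mul I hb, mul_inv, inv_inv, mul_comm, mul_assoc, inv_mul_cancel, mul_one]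

lemma dt_smul (γ : SL2 A) (x y : PL I) :
    dt I x y = lamx I γ x * lamx I γ y * dt I (γ • x) (γ • y) := by
  obtain ⟨g, rfl⟩ := pt_surj I x
  obtain ⟨h, rfl⟩ := pt_surj I y
  rw [smul_pt, smul_pt, dt_pt, dt_pt, lamx_pt, lamx_pt, cdet_mul]
  push_cast
  have h1 := (kap I (γ * g)).inv_mul
  have h2 := (kap I (γ * h)).inv_mul
  linear_combination
    (-(kap I g : A ⧸ I) * kap I h * Ideal.Quotient.mk I (cdet g h)) * h1
    - ((kap I g : A ⧸ I) * kap I h * Ideal.Quotient.mk I (cdet g h) *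
      (((kap I (γ * g))⁻¹ : (A ⧸ I)ˣ) : A ⧸ I) * kap I (γ * g)) * h2

lemma dt_plucker (x y z w : PL I) :
    dt I x y * dt I z w + dt I x w * dt I y z = dt I x z * dt I y w := by
  simp only [dt, ← map_mul, ← map_add, cdet_plucker]
end

section
variable {A : Type*} [CommRing A] [IsLocalRing A] (I : Ideal A)

/-- Reduction of points to the projective line of the residue field; two points are in general
position when their reductions differ. -/
def red (x : PL I) : PL (IsLocalRing.maximalIdeal A) := pt _ x.out

/-- The point at infinity, with column `(1, 0)`. -/
def pinf : PL I := pt I 1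

/-- The point zero, with column `(0, 1)`. -/
def pzero : PL I := pt I wey

/-- The point with column `(v, 1)`. -/
def pnum (v : A) : PL I := pt I (E12 v * wey)

variable {I} (hI : I ≤ IsLocalRing.maximalIdeal A)
include hI

lemma red_pt (g : SL2 A) : red I (pt I g) = pt _ g := by
  rw [red, ← mul_inv_cancel_left g (pt I g).out]
  exact pt_mul _ (show _ ∈ IsLocalRing.maximalIdeal A from hI (out_pt_mem I g)) g

lemma red_ne_iff (g h : SL2 A) : red I (pt I g) ≠ red I (pt I h) ↔ IsUnit (cdet g h) := by
  rw [red_pt hI, red_pt hI, Ne, pt_eq_iff, IsLocalRing.mem_maximalIdeal, mem_nonunits_iff, not_not]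

lemma isUnit_dt {x y : PL I} (h : red I x ≠ red I y) : IsUnit (dt I x y) := by
  rw [← pt_out I x, ← pt_out I y, red_ne_iff hI] at h
  exact h.map (Ideal.Quotient.mk I)

lemma dtu_coe {x y : PL I} (h : red I x ≠ red I y) : (dtu I x y : A ⧸ I) = dt I x y := by
  rw [dtu, dif_pos (isUnit_dt hI h)]; exact IsUnit.unit_spec _

lemma red_smul_ne (γ : SL2 A) (x y : PL I) (h : red I x ≠ red I y) :
    red I (γ • x) ≠ red I (γ • y) := by
  obtain ⟨g, rfl⟩ := pt_surj I x
  obtain ⟨k, rfl⟩ := pt_surj I y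
  rw [red_ne_iff hI] at h
  rwa [smul_pt, smul_pt, red_ne_iff hI, cdet_mul]

lemma dtu_smul (γ : SL2 A) {x y : PL I} (h : red I x ≠ red I y) :
    dtu I x y = lamx I γ x * lamx I γ y * dtu I (γ • x) (γ • y) := by
  ext
  rw [dtu_coe hI h, dt_smul I γ]
  push_cast
  rw [dtu_coe hI (red_smul_ne hI γ x y h)]

lemma dtu_plucker {x y z w : PL I} (h1 : red I x ≠ red I y) (h2 : red I x ≠ red I z)
    (h3 : red I x ≠ red I w) (h4 : red I y ≠ red I z) (h5 : red I y ≠ red I w)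
    (h6 : red I z ≠ red I w) :
    (dtu I x y : A ⧸ I) * dtu I z w + dtu I x w * dtu I y z = dtu I x z * dtu I y w := by
  rw [dtu_coe hI h1, dtu_coe hI h2, dtu_coe hI h3, dtu_coe hI h4, dtu_coe hI h5, dtu_coe hI h6,
    dt_plucker]

/-- The square class of a triple is computed by any choice of representing matrices. -/
lemma sqc_triple (g h k : SL2 A) (a b c : (A ⧸ I)ˣ)
    (h1 : red I (pt I g) ≠ red I (pt I h)) (h2 : red I (pt I g) ≠ red I (pt I k))
    (h3 : red I (pt I h) ≠ red I (pt I k))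
    (ha : Ideal.Quotient.mk I (cdet g h) = a) (hb : Ideal.Quotient.mk I (cdet h k) = b)
    (hc : Ideal.Quotient.mk I (cdet g k) = c) :
    sqc (dtu I (pt I g) (pt I h) * dtu I (pt I h) (pt I k) * dtu I (pt I g) (pt I k)) =
      sqc (a * b * c) := by
  rw [← sqc_mul_sq (a * b * c) (kap I g * kap I h * kap I k)]
  congr 1; ext
  push_cast
  rw [dtu_coe hI h1, dtu_coe hI h2, dtu_coe hI h3, dt_pt, dt_pt, dt_pt, ha, hb, hc]
  ring

lemma red_inf_zero : red I (pinf I) ≠ red I (pzero I) := by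
  rw [pinf, pzero, red_ne_iff hI]; simp [cdet, wey]

lemma red_inf_num (v : A) : red I (pinf I) ≠ red I (pnum I v) := by
  rw [pinf, pnum, red_ne_iff hI]; simp [cdet, wey, E12, sl_mul]

lemma red_zero_num (v : Aˣ) : red I (pzero I) ≠ red I (pnum I v) := by
  rw [pzero, pnum, red_ne_iff hI]; simp [cdet, wey, E12, sl_mul]

lemma red_num_num {v v' : A} (h : IsUnit (v - v')) : red I (pnum I v) ≠ red I (pnum I v') := by
  rw [pnum, pnum, red_ne_iff hI]; simpa [cdet, wey, E12, sl_mul] using h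

/-- `SL₂(A)` is transitive on pairs in general position. -/
lemma exists_smul_pair {x y : PL I} (h : red I x ≠ red I y) :
    ∃ γ : SL2 A, γ • pinf I = x ∧ γ • pzero I = y := by
  obtain ⟨g, rfl⟩ := pt_surj I x
  obtain ⟨k, rfl⟩ := pt_surj I y
  obtain ⟨l, rfl⟩ : ∃ l, k = g * l := ⟨g⁻¹ * k, (mul_inv_cancel_left g k).symm⟩
  rw [red_ne_iff hI, ← cdet_eq, inv_mul_cancel_left] at h
  obtain ⟨u, hu⟩ := h
  refine ⟨g * E12 (l.1 0 0 * (u⁻¹ : Aˣ)), ?_, ?_⟩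
  · rw [pinf, smul_pt, mul_one]
    exact pt_mul I (by rw [mem_Gamma0]; simp [E12]) g
  · rw [pzero, smul_pt, pt_eq_iff, mul_assoc, cdet_mul]
    have : cdet (E12 (l.1 0 0 * (u⁻¹ : Aˣ)) * wey) l = 0 := by
      simp only [cdet, sl_mul, E12, wey, slm_00, slm_01, slm_10, slm_11, ← hu]
      linear_combination (l.1 0 0) * u.inv_mul
    rw [this]; exact I.zero_mem

/-- The points in general position to `∞` and `0` are the points with column `(v, 1)`, `v` a unit. -/
lemma exists_num {z : PL I} (h1 : red I (pinf I) ≠ red I z) (h2 : red I (pzero I) ≠ red I z) :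
    ∃ v : Aˣ, z = pnum I v := by
  obtain ⟨g, rfl⟩ := pt_surj I z
  rw [pinf, red_ne_iff hI] at h1
  rw [pzero, red_ne_iff hI] at h2
  simp only [cdet, sl_one_00, sl_one_10, wey, slm_00, slm_10] at h1 h2
  obtain ⟨c, hc⟩ := h1
  obtain ⟨a, ha⟩ := h2
  refine ⟨-a * c⁻¹, ?_⟩
  rw [pnum, pt_eq_iff]
  have h : cdet g (E12 ((-a * c⁻¹ : Aˣ) : A) * wey) = 0 := by
    simp only [cdet, sl_mul, E12, wey, slm_00, slm_01, slm_10, slm_11]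
    push_cast
    linear_combination (-(a : A) * (c⁻¹ : Aˣ)) * hc + (a : A) * c.mul_inv + ha
  rw [h]; exact I.zero_mem

/-- The square class of the triple `(∞, 0, v)` is `⟨-v⟩`. -/
lemma sqc_inf_zero_num (v : Aˣ) :
    sqc (dtu I (pinf I) (pzero I) * dtu I (pzero I) (pnum I v) * dtu I (pinf I) (pnum I v)) =
      sqc (Units.map (Ideal.Quotient.mk I : A →* A ⧸ I) (-v)) := by
  have := sqc_triple hI 1 wey (E12 (v : A) * wey) 1
    (Units.map (Ideal.Quotient.mk I : A →* A ⧸ I) (-v)) 1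
    (red_inf_zero hI) (red_inf_num hI v) (red_zero_num hI v)
    (by simp [cdet, wey]) (by simp [cdet, wey, E12, sl_mul]) (by simp [cdet, wey, E12, sl_mul])
  rw [one_mul, mul_one] at this
  exact this

lemma units_lift (u : (A ⧸ I)ˣ) : ∃ v : Aˣ, Units.map (Ideal.Quotient.mk I : A →* A ⧸ I) v = u := by
  obtain ⟨a, ha⟩ := Ideal.Quotient.mk_surjective (u : A ⧸ I)
  obtain ⟨b, hb⟩ := Ideal.Quotient.mk_surjective ((u⁻¹ : (A ⧸ I)ˣ) : A ⧸ I)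
  have h1 : a * b - 1 ∈ IsLocalRing.maximalIdeal A := by
    apply hI
    rw [← Ideal.Quotient.eq_zero_iff_mem, map_sub, map_mul, ha, hb]; simp
  have h2 : IsUnit (a * b) := by
    by_contra h
    have h3 : a * b ∈ IsLocalRing.maximalIdeal A := h
    have h4 := (IsLocalRing.maximalIdeal A).sub_mem h3 h1
    rw [sub_sub_cancel] at h4
    exact (Ideal.ne_top_iff_one _).1 (IsLocalRing.maximalIdeal.isMaximal A).ne_top h4
  obtain ⟨v, hv⟩ := isUnit_of_mul_isUnit_left h2
  exact ⟨v, Units.ext (by simp [hv, ha])⟩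

/-- An element congruent to a unit modulo `I` is a unit. -/
lemma isUnit_of_isUnit_mk {a : A} (h : IsUnit (Ideal.Quotient.mk I a)) : IsUnit a := by
  obtain ⟨u, hu⟩ := h
  obtain ⟨v, hv⟩ := units_lift hI u
  have h1 : a - v ∈ IsLocalRing.maximalIdeal A := by
    apply hI
    rw [← Ideal.Quotient.eq_zero_iff_mem, map_sub, ← hu, ← hv]; simp
  by_contra h
  have h3 : a ∈ IsLocalRing.maximalIdeal A := h
  have h4 := (IsLocalRing.maximalIdeal A).sub_mem h3 h1
  rw [sub_sub_cancel] at h4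
  exact h4 v.isUnit

end

/-! ### General position over a residue field with at least four elements -/

lemma exists_notMem_of_inj {ι P : Type*} [Fintype ι] (f : ι → P)
    (hf : Function.Injective f) (s : Finset P) (h : s.card < Fintype.card ι) :
    ∃ i, f i ∉ s := by
  by_contra hc
  push Not at hc
  have := Finset.card_le_card_of_injOn f (s := Finset.univ) (t := s) (fun i _ => hc i) hf.injOn
  rw [Finset.card_univ] at this
  omega

section
variable {A : Type*} [CommRing A] [IsLocalRing A]

lemma exists_four (hcard : 4 ≤ Nat.card (IsLocalRing.ResidueField A) ∨
    Infinite (IsLocalRing.ResidueField A)) :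
    ∃ e : Fin 4 → A, Function.Injective (fun i => IsLocalRing.residue A (e i)) := by
  have : ∃ e : Fin 4 → IsLocalRing.ResidueField A, Function.Injective e := by
    rcases hcard with h | h
    · have : Finite (IsLocalRing.ResidueField A) := Nat.finite_of_card_ne_zero (by omega)
      have := Fintype.ofFinite (IsLocalRing.ResidueField A)
      obtain ⟨e⟩ := Function.Embedding.nonempty_of_card_le (α := Fin 4)
        (β := IsLocalRing.ResidueField A) (by
          rw [Fintype.card_fin, ← Nat.card_eq_fintype_card]; exact h)
      exact ⟨e, e.injective⟩
    · exact ⟨fun i => Infinite.natEmbedding _ (i : ℕ), fun i j h => by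
        simpa [Fin.ext_iff] using h⟩
  obtain ⟨e, he⟩ := this
  choose l hl using fun i => IsLocalRing.residue_surjective (e i)
  exact ⟨l, fun i j h => he (by simpa [hl] using h)⟩

lemma isUnit_of_residue_ne {a : A} (h : IsLocalRing.residue A a ≠ 0) : IsUnit a := by
  by_contra hc
  exact h ((IsLocalRing.residue_eq_zero_iff a).2 hc)

lemma exists_unit_sq (e : Fin 4 → A)
    (he : Function.Injective (fun i => IsLocalRing.residue A (e i))) :
    ∃ u : Aˣ, IsUnit ((u : A) ^ 2 - 1) := by
  classical
  obtain ⟨i, hi⟩ := exists_notMem_of_inj _ he {0, 1, -1}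
    (lt_of_le_of_lt Finset.card_le_three (by simp))
  simp only [Finset.mem_insert, Finset.mem_singleton, not_or] at hi
  obtain ⟨u, hu⟩ := isUnit_of_residue_ne hi.1
  refine ⟨u, isUnit_of_residue_ne ?_⟩
  rw [hu, map_sub, map_pow, map_one, Ne, sub_eq_zero, sq_eq_one_iff]
  simp only [hi.2.1, hi.2.2, or_self, not_false_eq_true]

variable {I : Ideal A} (hI : I ≤ IsLocalRing.maximalIdeal A)
include hI

lemma gpset (e : Fin 4 → A)
    (he : Function.Injective (fun i => IsLocalRing.residue A (e i))) :
    GPSet (SL2 A) (PL I) (PL (IsLocalRing.maximalIdeal A)) (red I) where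
  smul_ne := red_smul_ne hI
  avoid a b c d := by
    classical
    let p : Option (Fin 4) → PL I := fun i => i.elim (pinf I) (fun j => pnum I (e j))
    have hp : Function.Injective (fun i => red I (p i)) := by
      rintro (_ | i) (_ | j) h
      · rfl
      · exact absurd h (red_inf_num hI _)
      · exact absurd h.symm (red_inf_num hI _)
      · by_contra hij
        refine red_num_num hI (isUnit_of_residue_ne ?_) h
        rw [map_sub, Ne, sub_eq_zero]
        exact fun h => hij (congrArg some (he h))
    obtain ⟨i, hi⟩ := exists_notMem_of_inj _ hp {a, b, c, d}
      (lt_of_le_of_lt Finset.card_le_four (by simp))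
    simp only [Finset.mem_insert, Finset.mem_singleton, not_or] at hi
    exact ⟨p i, hi.1, hi.2.1, hi.2.2.1, hi.2.2.2⟩

/-! ### Additive functions on `Γ₀(I)` -/

lemma lam_diagSL (v : Aˣ) :
    lam I (diagSL v) = Units.map (Ideal.Quotient.mk I : A →* A ⧸ I) v := by
  ext
  rw [lam_coe I (diagSL_mem_Gamma0 I v)]; rfl

lemma E12_mem (t : A) : E12 t ∈ Gamma0 I := by rw [mem_Gamma0]; simp [E12]

lemma E21_mem {t : A} (ht : t ∈ I) : E21 t ∈ Gamma0 I := ht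

lemma gamma0_unit {b : SL2 A} (hb : b ∈ Gamma0 I) : ∃ a : Aˣ, b.1 0 0 = a := by
  have : IsUnit (b.1 0 0) := isUnit_of_isUnit_mk hI (by rw [← lam_coe I hb]; exact Units.isUnit _)
  exact ⟨this.unit, rfl⟩

/-- An additive function on `Γ₀(I)` factors through the character `lam`: it vanishes on elementary
matrices because they are commutators, and on `diagSL a` with `a ≡ 1` modulo `I` because this is,
up to elementary matrices of `Γ₀(I)`, equal to `E12 1 * E21 (a - 1)`. -/
lemma add_factor {V : Type*} [AddCommGroup V] (hu : ∃ u : Aˣ, IsUnit ((u : A) ^ 2 - 1))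
    (f : SL2 A → V)
    (hf : ∀ x ∈ Gamma0 I, ∀ y ∈ Gamma0 I, f (x * y) = f x + f y) :
    ∃ ε : (A ⧸ I)ˣ → V, (∀ a b, ε (a * b) = ε a + ε b) ∧ ∀ b ∈ Gamma0 I, f b = ε (lam I b) := by
  obtain ⟨u, hu⟩ := hu
  have h12 : ∀ t, f (E12 t) = 0 := fun t =>
    add_E12 u hu _ f hf (diagSL_mem_Gamma0 I u) ⊤ (fun j _ => E12_mem hI j) t trivial
  have h21 : ∀ t ∈ I, f (E21 t) = 0 :=
    add_E21 u hu _ f hf (diagSL_mem_Gamma0 I u) I (fun j hj => E21_mem hI hj)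
  have hd : ∀ b ∈ Gamma0 I, ∀ a : Aˣ, b.1 0 0 = a → f b = f (diagSL a) := by
    intro b hb a ha
    have h1 : b.1 1 0 * (a⁻¹ : Aˣ) ∈ I := I.mul_mem_right _ hb
    rw [sl_decomp b a ha, hf _ ((Gamma0 I).mul_mem (E21_mem hI h1) (diagSL_mem_Gamma0 I a)) _
      (E12_mem hI _), hf _ (E21_mem hI h1) _ (diagSL_mem_Gamma0 I a), h12, h21 _ h1]
    simp
  have hone : ∀ b ∈ Gamma0 I, lam I b = 1 → f b = 0 := by
    intro b hb hl
    obtain ⟨a, ha⟩ := gamma0_unit hI hb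
    have hx : (a : A) - 1 ∈ I := by
      rw [← Ideal.Quotient.eq_zero_iff_mem, map_sub, map_one, ← ha, ← lam_coe I hb, hl]; simp
    have h1 : (E12 (1 : A) * E21 ((a : A) - 1)).1 0 0 = (a : A) := by simp [sl_mul, E12, E21]
    rw [hd b hb a ha, ← hd _ ((Gamma0 I).mul_mem (E12_mem hI 1) (E21_mem hI hx)) a h1,
      hf _ (E12_mem hI 1) _ (E21_mem hI hx), h12, h21 _ hx, add_zero]
  have heq : ∀ b ∈ Gamma0 I, ∀ b' ∈ Gamma0 I, lam I b = lam I b' → f b = f b' := by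
    intro b hb b' hb' hl
    have hi := (Gamma0 I).inv_mem hb'
    have h1 := hone (b * b'⁻¹) ((Gamma0 I).mul_mem hb hi) (by
      rw [lam_mul I hb hi, lam_inv I hb', hl, mul_inv_cancel])
    rw [hf _ hb _ hi, add_inv_eq_neg _ f hf hb'] at h1
    linear_combination (norm := abel) h1
  choose l hl using units_lift hI
  have hll : ∀ v, lam I (diagSL (l v)) = v := fun v => by rw [lam_diagSL hI, hl]
  have hm := fun v => diagSL_mem_Gamma0 I (l v)
  refine ⟨fun v => f (diagSL (l v)), fun a b => ?_, fun b hb => ?_⟩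
  · rw [← hf _ (hm a) _ (hm b)]
    exact heq _ (hm _) _ ((Gamma0 I).mul_mem (hm a) (hm b)) (by
      rw [lam_mul I (hm a) (hm b), hll, hll, hll])
  · exact heq _ hb _ (hm _) (hll _).symm

/-! ### The invariant cocycle on triples -/


/-- The square class in `GW(A / I)` of the product of the determinants of a triple of points. -/
def tri (I : Ideal A) (x y z : PL I) : GWq ℤ (A ⧸ I) := gw (dtu I x y * dtu I y z * dtu I x z)

lemma sqc_smul (γ : SL2 A) {x y z : PL I} (h1 : red I x ≠ red I y) (h2 : red I x ≠ red I z)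
    (h3 : red I y ≠ red I z) :
    sqc (dtu I (γ • x) (γ • y) * dtu I (γ • y) (γ • z) * dtu I (γ • x) (γ • z)) =
      sqc (dtu I x y * dtu I y z * dtu I x z) := by
  rw [dtu_smul hI γ h1, dtu_smul hI γ h2, dtu_smul hI γ h3]
  rw [← sqc_mul_sq (dtu I (γ • x) (γ • y) * dtu I (γ • y) (γ • z) * dtu I (γ • x) (γ • z))
    (lamx I γ x * lamx I γ y * lamx I γ z)]
  congr 1; ext; push_cast; ring

lemma tri_smul (γ : SL2 A) {x y z : PL I} (h1 : red I x ≠ red I y) (h2 : red I x ≠ red I z)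
    (h3 : red I y ≠ red I z) : tri I (γ • x) (γ • y) (γ • z) = tri I x y z :=
  gw_congr (sqc_smul hI γ h1 h2 h3)

lemma tri_cocycle {x y z w : PL I} (h1 : red I x ≠ red I y) (h2 : red I x ≠ red I z)
    (h3 : red I x ≠ red I w) (h4 : red I y ≠ red I z) (h5 : red I y ≠ red I w)
    (h6 : red I z ≠ red I w) :
    tri I y z w - tri I x z w + tri I x y w - tri I x y z = 0 :=
  gw_four _ _ _ _ _ _ (dtu_plucker hI h1 h2 h3 h4 h5 h6)

lemma tri_inf_zero_num (v : Aˣ) : tri I (pinf I) (pzero I) (pnum I v) =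
    gw (Units.map (Ideal.Quotient.mk I : A →* A ⧸ I) (-v)) :=
  gw_congr (sqc_inf_zero_num hI v)

end

/-! ### Additive maps out of the Grothendieck–Witt ring -/

section
variable {R : Type*} [CommRing R] {V : Type*} [AddCommGroup V]

lemma sqc_surj (g : SqCl R) : ∃ u : Rˣ, sqc u = g := QuotientGroup.mk_surjective g

lemma gring_hom_ext (f : GRing ℤ R →+ V) (h : ∀ u : Rˣ, f (gcl ℤ u) = 0) (x : GRing ℤ R) :
    f x = 0 := by
  induction x using MonoidAlgebra.induction_on with
  | of g =>
    obtain ⟨u, rfl⟩ := sqc_surj g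
    exact h u
  | add x y hx hy => rw [map_add, hx, hy, add_zero]
  | smul r x hx => rw [map_zsmul, hx, smul_zero]

lemma gw_hom_ext (f : GWq ℤ R →+ V) (h : ∀ u : Rˣ, f (gw u) = 0) (x : GWq ℤ R) : f x = 0 := by
  obtain ⟨y, rfl⟩ := Ideal.Quotient.mk_surjective x
  exact gring_hom_ext (f.comp (Ideal.Quotient.mk (StRel ℤ R)).toAddMonoidHom) h y

lemma IfundGW_eq : IfundGW ℤ R = Ideal.span (Set.range fun u : Rˣ => gw u - 1) := by
  rw [IfundGW, augId, Ideal.map_span]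
  congr 1
  ext x
  constructor
  · rintro ⟨_, ⟨g, rfl⟩, rfl⟩
    obtain ⟨u, rfl⟩ := sqc_surj g
    exact ⟨u, by simp [gw, gcl]⟩
  · rintro ⟨u, rfl⟩
    exact ⟨_, ⟨sqc u, rfl⟩, by simp [gw, gcl]⟩

lemma gw_sub_one_mem (u : Rˣ) : gw u - 1 ∈ IfundGW ℤ R := by
  rw [IfundGW_eq]; exact Ideal.subset_span ⟨u, rfl⟩

/-- An additive map of the form `⟨u⟩ ↦ n + ε u` with `ε` additive kills the square of the
fundamental ideal. -/
lemma kill_sq (ψ : GWq ℤ R →+ V) (n : V) (ε : Rˣ → V) (hε : ∀ a b, ε (a * b) = ε a + ε b)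
    (h : ∀ u, ψ (gw u) = n + ε u) (x : GWq ℤ R) (hx : x ∈ IfundGW ℤ R ^ 2) : ψ x = 0 := by
  rw [IfundGW_eq, pow_two, Ideal.span_mul_span'] at hx
  have key : ∀ r : GWq ℤ R, ψ (r * x) = 0 := by
    induction hx using Submodule.span_induction with
    | mem x hx =>
      obtain ⟨_, ⟨a, rfl⟩, _, ⟨b, rfl⟩, rfl⟩ := hx
      intro r
      refine gw_hom_ext (ψ.comp (AddMonoidHom.mulRight _)) (fun c => ?_) r
      have : gw c * ((gw a - 1) * (gw b - 1)) =
          gw (c * a * b) - gw (c * a) - gw (c * b) + gw c := by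
        simp only [gw_mul]; ring
      simp only [AddMonoidHom.comp_apply, AddMonoidHom.mulRight_apply]
      rw [this, map_add, map_sub, map_sub, h, h, h, h, hε (c * a), hε c a, hε c b]
      abel
    | zero => intro r; simp
    | add x y _ _ hx hy => intro r; rw [mul_add, map_add, hx, hy, add_zero]
    | smul a x _ hx => intro r; rw [smul_eq_mul, ← mul_assoc, hx]
  simpa using key 1
end

/-! ### The homomorphism to the Grothendieck–Witt ring -/

section
open GroupHomology
variable {A : Type*} [CommRing A] [IsLocalRing A] {I : Ideal A}
  (hI : I ≤ IsLocalRing.maximalIdeal A)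
  (H : GPSet (SL2 A) (PL I) (PL (IsLocalRing.maximalIdeal A)) (red I))
include hI H

/-- The transgression of the invariant cocycle `tri`, normalized at the point at infinity. -/
lemma exists_main : ∃ (φ : PL I → PL I → GWq ℤ (A ⧸ I)) (η : SL2 A → PL I → GWq ℤ (A ⧸ I))
    (c : SL2 A → SL2 A → GWq ℤ (A ⧸ I)), Transgr (red I) φ η c ∧ (∀ γ, η γ (pinf I) = 0) ∧
    ∀ x y z, red I x ≠ red I y → red I x ≠ red I z → red I y ≠ red I z →
      φ y z - φ x z + φ x y = tri I x y z := by
  obtain ⟨φ, hφ⟩ := gp_exact_two (red I) H.avoid (tri I)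
    (fun x y z w h1 h2 h3 h4 h5 h6 => tri_cocycle hI h1 h2 h3 h4 h5 h6)
  obtain ⟨η, c, t, h0⟩ := H.exists_transgr (pinf I) φ (by
    intro γ x y z h1 h2 h3
    rw [hφ x y z h1 h2 h3, hφ _ _ _ (H.smul_ne γ _ _ h1) (H.smul_ne γ _ _ h2)
      (H.smul_ne γ _ _ h3), tri_smul hI γ h1 h2 h3])
  exact ⟨φ, η, c, t, h0, hφ⟩

variable {φ : PL I → PL I → GWq ℤ (A ⧸ I)} {η : SL2 A → PL I → GWq ℤ (A ⧸ I)}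
  {c : SL2 A → SL2 A → GWq ℤ (A ⧸ I)} (t : Transgr (red I) φ η c)
  (hφ : ∀ x y z, red I x ≠ red I y → red I x ≠ red I z → red I y ≠ red I z →
      φ y z - φ x z + φ x y = tri I x y z)
include t hφ

/-- Modulo the square of the fundamental ideal, `tri` has the primitive
`1 + ⟨⟨d(x,y)⟩⟩`, whose transgression is trivial. -/
lemma main_mem (z : Ch ℤ (SL2 A) 2) (hz : z ∈ cycles ℤ (SL2 A) 2) :
    evCh c z ∈ IfundGW ℤ (A ⧸ I) ^ 2 := by
  set π := Ideal.Quotient.mk (IfundGW ℤ (A ⧸ I) ^ 2) with hπ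
  obtain ⟨L, hL⟩ : ∃ L : (A ⧸ I)ˣ → GWq ℤ (A ⧸ I) ⧸ IfundGW ℤ (A ⧸ I) ^ 2,
    ∀ u, L u = π (gw u - 1) := ⟨_, fun _ => rfl⟩
  have hadd : ∀ u v, L (u * v) = L u + L v := by
    intro u v
    have h1 : (gw u - 1) * (gw v - 1) ∈ IfundGW ℤ (A ⧸ I) ^ 2 := by
      rw [pow_two]; exact Ideal.mul_mem_mul (gw_sub_one_mem u) (gw_sub_one_mem v)
    rw [← Ideal.Quotient.eq_zero_iff_mem, ← hπ] at h1
    rw [hL, hL, hL, ← map_add, ← sub_eq_zero, ← map_sub, ← h1, gw_mul]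
    congr 1; ring
  have htwo : ∀ u, L u + L u = 0 := by
    intro u
    rw [← hadd, hL, show u * u = 1 * u ^ 2 by rw [one_mul, pow_two], gw_mul_sq, gw_one, sub_self,
      map_zero]
  have hgw : ∀ u, π (gw u) = 1 + L u := by
    intro u; rw [hL, map_sub, map_one]; abel
  have t' : Transgr (red I) (fun x y => 1 + L (dtu I x y)) (fun γ x => L (lamx I γ x))
      (fun _ _ => 0) := by
    refine ⟨fun γ x y h => ?_, fun γ δ x => ?_⟩
    · have e1 := congrArg L (dtu_smul hI γ h)
      rw [hadd, hadd] at e1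
      have e2 := htwo (lamx I γ y)
      linear_combination (norm := abel) -e1 - e2
    · rw [lamx_mul, hadd]; abel
  obtain ⟨e, he⟩ := H.compare (pinf I) (t.map π.toAddMonoidHom) t' (by
    intro x y z h1 h2 h3
    have e1 := congrArg π (hφ x y z h1 h2 h3)
    rw [tri, hgw, hadd, hadd, map_add, map_sub] at e1
    have e2 := htwo (dtu I x z)
    simp only [RingHom.toAddMonoidHom_eq_coe, AddMonoidHom.coe_coe]
    linear_combination (norm := abel) e1 + e2)
  have := evCh_congr_cycles he hz
  rw [evCh_map] at this
  rw [← Ideal.Quotient.eq_zero_iff_mem, ← hπ]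
  refine Eq.trans this ?_
  have h0 : evCh (G := SL2 A) (fun _ _ => (0 : GWq ℤ (A ⧸ I) ⧸ IfundGW ℤ (A ⧸ I) ^ 2)) = 0 := by
    refine Finsupp.lhom_ext' (fun g => LinearMap.ext_ring ?_)
    simp [evCh]
  rw [h0]; rfl

end

section
variable {A : Type*} [CommRing A] (I : Ideal A)

lemma smul_pinf {b : SL2 A} (hb : b ∈ Gamma0 I) : b • pinf I = pinf I := by
  rw [pinf, smul_pt, pt_eq_iff]
  rw [mem_Gamma0] at hb
  simpa [cdet] using hb

lemma lamx_of_mul {γ g b : SL2 A} (hb : b ∈ Gamma0 I) (h : γ * g = g * b) :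
    lamx I γ (pt I g) = lam I b := by
  rw [lamx_pt, h, kap_mul I hb, mul_inv, inv_inv, mul_comm, mul_assoc, inv_mul_cancel, mul_one]

end

/-! ### Surjectivity -/

section
variable {A : Type*} [CommRing A] (I : Ideal A)

lemma diagSL_wey (a : Aˣ) : diagSL a * wey = wey * diagSL a⁻¹ := by
  apply sl_ext <;> simp [sl_mul, wey]

lemma diagSL_smul_pinf (a : Aˣ) : diagSL a • pinf I = pinf I := smul_pinf I (diagSL_mem_Gamma0 I a)

lemma diagSL_smul_pzero (a : Aˣ) : diagSL a • pzero I = pzero I := by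
  rw [pzero, smul_pt, diagSL_wey, pt_mul I (diagSL_mem_Gamma0 I _)]

/-- A 1-cocycle of `SL₂(A)` in the functions on the projective line is determined, up to
coboundary, by its restriction to `Γ₀(I)` at the point at infinity. -/
lemma cocycle_shape {V : Type*} [AddCommGroup V] (η : SL2 A → PL I → V)
    (hη : ∀ γ δ x, η (γ * δ) x = η γ (δ • x) + η δ x) (ε : (A ⧸ I)ˣ → V)
    (hε : ∀ a b, ε (a * b) = ε a + ε b) (h : ∀ b ∈ Gamma0 I, η b (pinf I) = ε (lam I b)) :
    ∃ ν : PL I → V, ∀ γ x, η γ x = ν (γ • x) - ν x + ε (lamx I γ x) := by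
  have hε1 : ε 1 = 0 := by simpa using hε 1 1
  have hεi : ∀ a, ε a⁻¹ = - ε a := fun a => by
    have := hε a a⁻¹
    rw [mul_inv_cancel, hε1] at this
    exact (neg_eq_of_add_eq_zero_right this.symm).symm
  obtain ⟨ν, hν⟩ : ∃ ν : PL I → V, ∀ x, ν x = η x.out (pinf I) + ε (kap I x.out) :=
    ⟨_, fun _ => rfl⟩
  have hν' : ∀ g, ν (pt I g) = η g (pinf I) + ε (kap I g) := by
    intro g
    have hb := out_pt_mem I g
    obtain ⟨b, hbe⟩ : ∃ b, b = g⁻¹ * (pt I g).out := ⟨_, rfl⟩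
    have hg : (pt I g).out = g * b := by rw [hbe, mul_inv_cancel_left]
    rw [← hbe] at hb
    rw [hν, hg, hη, smul_pinf I hb, h b hb, kap_mul I hb, hε, hεi]
    abel
  refine ⟨ν, fun γ x => ?_⟩
  obtain ⟨g, rfl⟩ := pt_surj I x
  rw [smul_pt, hν', hν', lamx_pt, hη, hε, hεi, pinf, smul_pt, mul_one]
  abel
end

section
open GroupHomology
variable {A : Type*} [CommRing A] [IsLocalRing A] {I : Ideal A}
  (hI : I ≤ IsLocalRing.maximalIdeal A)
  (H : GPSet (SL2 A) (PL I) (PL (IsLocalRing.maximalIdeal A)) (red I))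
  (hu : ∃ u : Aˣ, IsUnit ((u : A) ^ 2 - 1))
  {φ : PL I → PL I → GWq ℤ (A ⧸ I)} {η : SL2 A → PL I → GWq ℤ (A ⧸ I)}
  {c : SL2 A → SL2 A → GWq ℤ (A ⧸ I)} (t : Transgr (red I) φ η c)
  (hφ : ∀ x y z, red I x ≠ red I y → red I x ≠ red I z → red I y ≠ red I z →
      φ y z - φ x z + φ x y = tri I x y z)
include hI H hu t hφ

/-- A character of `GW(A / I)` which kills the values of the transgression on cycles kills the
square of the fundamental ideal. -/
lemma main_char (ψ : GWq ℤ (A ⧸ I) →+ QZ)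
    (hψ : ∀ z ∈ cycles ℤ (SL2 A) 2, ψ (evCh c z) = 0) (x : GWq ℤ (A ⧸ I))
    (hx : x ∈ IfundGW ℤ (A ⧸ I) ^ 2) : ψ x = 0 := by
  -- `ψ ∘ c` is the coboundary of `e`
  obtain ⟨e', he'⟩ := exists_char_extend (dd ℤ (SL2 A) 1).toAddMonoidHom
    (ψ.comp (evCh c).toAddMonoidHom) (fun z hz => hψ z hz)
  obtain ⟨e, hee⟩ : ∃ e : SL2 A → QZ, ∀ γ, e γ = e' (Finsupp.single ![γ] 1) := ⟨_, fun _ => rfl⟩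
  have he : ∀ γ δ, ψ (c γ δ) = e δ - e (γ * δ) + e γ := by
    intro γ δ
    have := he' (Finsupp.single ![γ, δ] 1)
    simp only [LinearMap.toAddMonoidHom_coe, AddMonoidHom.comp_apply] at this
    rw [dd_single, dfun_two, map_add, map_sub] at this
    rw [hee, hee, hee, this]
    exact congrArg ψ (evCh_single c γ δ).symm
  obtain ⟨η', hη'⟩ : ∃ η' : SL2 A → PL I → QZ, ∀ γ x, η' γ x = ψ (η γ x) - e γ :=
    ⟨_, fun _ _ => rfl⟩
  have hcoc : ∀ γ δ x, η' (γ * δ) x = η' γ (δ • x) + η' δ x := by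
    intro γ δ x
    have h1 := congrArg ψ (t.coc γ δ x)
    rw [map_sub, map_add, he] at h1
    rw [hη', hη', hη']
    linear_combination (norm := abel) h1
  obtain ⟨ε, hε, hεf⟩ := add_factor hI hu (fun b => η' b (pinf I)) (by
    intro b _ b' hb'
    simp only [hcoc, smul_pinf I hb'])
  obtain ⟨ν, hν⟩ := cocycle_shape I η' hcoc ε hε hεf
  obtain ⟨φ', hφ'⟩ : ∃ φ' : PL I → PL I → QZ, ∀ x y, φ' x y = ψ (φ x y) - ν y + ν x :=
    ⟨_, fun _ _ => rfl⟩
  have hdiff : ∀ γ x y, red I x ≠ red I y →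
      φ' (γ • x) (γ • y) - φ' x y = ε (lamx I γ y) - ε (lamx I γ x) := by
    intro γ x y h
    have h1 := congrArg ψ (t.diff γ x y h)
    rw [map_sub, map_sub] at h1
    have h2 := hν γ x
    have h3 := hν γ y
    rw [hη'] at h2 h3
    rw [hφ', hφ']
    linear_combination (norm := abel) h1 + h3 - h2
  -- the diagonal matrices fix `∞` and `0`, hence `ε` is killed by two
  have hε1 : ε 1 = 0 := by simpa using hε 1 1
  have htwo : ∀ a, ε a + ε a = 0 := by
    intro a
    obtain ⟨v, hv⟩ := units_lift hI a
    have h1 := hdiff (diagSL v) _ _ (red_inf_zero hI)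
    rw [diagSL_smul_pinf, diagSL_smul_pzero, pinf, pzero, sub_self,
      lamx_of_mul I (diagSL_mem_Gamma0 I v⁻¹) (diagSL_wey v),
      lamx_one I _ (diagSL_mem_Gamma0 I v), lam_diagSL hI, lam_diagSL hI, map_inv, hv] at h1
    have h2 := hε a a⁻¹
    rw [mul_inv_cancel, hε1] at h2
    linear_combination (norm := abel) h1 - h2
  -- `φ' - ε(d)` is invariant, hence constant
  obtain ⟨n, hn⟩ : ∃ n, ∀ x y, red I x ≠ red I y → φ' x y = n + ε (dtu I x y) := by
    refine ⟨φ' (pinf I) (pzero I) - ε (dtu I (pinf I) (pzero I)), fun x y h => ?_⟩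
    obtain ⟨γ, rfl, rfl⟩ := exists_smul_pair hI h
    have h1 := hdiff γ _ _ (red_inf_zero hI)
    have h2 := congrArg ε (dtu_smul hI γ (red_inf_zero hI))
    rw [hε, hε] at h2
    have h3 := htwo (lamx I γ (pzero I))
    linear_combination (norm := abel) h1 + h2 + h3
  refine kill_sq ψ n ε hε (fun u => ?_) x hx
  obtain ⟨w, hw⟩ := units_lift hI u
  have g1 := red_inf_zero hI
  have g2 := red_inf_num hI ((-w : Aˣ) : A)
  have g3 := red_zero_num hI (-w)
  have h1 := congrArg ψ (hφ _ _ _ g1 g2 g3)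
  have h2 := sqc_inf_zero_num hI (-w)
  rw [tri_inf_zero_num hI, neg_neg, hw, map_add, map_sub] at h1
  rw [neg_neg, hw] at h2
  obtain ⟨s, hs⟩ := sqc_eq_iff h2
  have h3 := congrArg ε hs
  rw [pow_two, hε, hε, hε, hε] at h3
  have h4 := hn _ _ g1
  have h5 := hn _ _ g2
  have h6 := hn _ _ g3
  rw [hφ'] at h4 h5 h6
  have h7 := htwo s
  have h8 := htwo (dtu I (pinf I) (pnum I ((-w : Aˣ) : A)))
  linear_combination (norm := abel) -h1 - h3 + h4 - h5 + h6 - h7 - h8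
end

/-! ### Cocycles vanishing on a subgroup -/

/-- A 2-cocycle which vanishes on a subgroup `B` becomes a coboundary on the functions on `G / B`. -/
lemma rel_cocycle {G V : Type*} [Group G] [AddCommGroup V] (B : Subgroup G) (F : G → G → V)
    (hF : ∀ a b d, F b d - F (a * b) d + F a (b * d) - F a b = 0)
    (hB : ∀ b ∈ B, ∀ b' ∈ B, F b b' = 0) :
    ∃ η : G → G ⧸ B → V, ∀ γ δ x, F γ δ = η γ (δ • x) + η δ x - η (γ * δ) x := by
  refine ⟨fun γ x => F γ x.out - F (γ • x).out ((γ • x).out⁻¹ * (γ * x.out)), fun γ δ x => ?_⟩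
  have hmem : ∀ (γ : G) (x : G ⧸ B), (γ • x).out⁻¹ * (γ * x.out) ∈ B := by
    intro γ x
    rw [← QuotientGroup.eq, QuotientGroup.out_eq', ← smul_eq_mul, ← MulAction.Quotient.smul_mk,
      QuotientGroup.out_eq']
  have m1 := hmem γ (δ • x)
  have m2 := hmem δ x
  simp only [mul_smul]
  obtain ⟨s0, h0⟩ : ∃ s, x.out = s := ⟨_, rfl⟩
  obtain ⟨s1, h1⟩ : ∃ s, (δ • x).out = s := ⟨_, rfl⟩
  obtain ⟨s2, h2⟩ : ∃ s, (γ • δ • x).out = s := ⟨_, rfl⟩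
  rw [h0, h1] at m2
  rw [h1, h2] at m1
  rw [h0, h1, h2]
  obtain ⟨b1, hb1⟩ : ∃ b, s2⁻¹ * (γ * s1) = b := ⟨_, rfl⟩
  obtain ⟨b2, hb2⟩ : ∃ b, s1⁻¹ * (δ * s0) = b := ⟨_, rfl⟩
  have hb12 : s2⁻¹ * (γ * δ * s0) = b1 * b2 := by rw [← hb1, ← hb2]; group
  have k1 : γ * s1 = s2 * b1 := by rw [← hb1]; group
  have k2 : s1 * b2 = δ * s0 := by rw [← hb2]; group
  rw [hb1] at m1
  rw [hb2] at m2
  rw [hb1, hb2, hb12]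
  have e1 := hF γ δ s0
  have e2 := hF γ s1 b2
  have e3 := hF s2 b1 b2
  rw [k1, k2] at e2
  rw [hB _ m1 _ m2] at e3
  linear_combination (norm := abel) -e1 + e2 - e3

/-! ### The stabilizer of the pair `(∞, 0)` -/

section
variable {A : Type*} [CommRing A] {I : Ideal A}

/-- The stabilizer of the pair `(∞, 0)`. -/
def tor (I : Ideal A) : Subgroup (SL2 A) :=
  MulAction.stabilizer (SL2 A) (pinf I) ⊓ MulAction.stabilizer (SL2 A) (pzero I)

lemma mem_tor {t : SL2 A} : t ∈ tor I ↔ t.1 1 0 ∈ I ∧ t.1 0 1 ∈ I := by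
  rw [tor, Subgroup.mem_inf, MulAction.mem_stabilizer_iff, MulAction.mem_stabilizer_iff, pinf, pzero,
    smul_pt, smul_pt, pt_eq_iff, pt_eq_iff]
  simp [cdet, sl_mul, wey]

lemma tor_inf {t : SL2 A} (ht : t ∈ tor I) : t • pinf I = pinf I := ht.1
lemma tor_zero {t : SL2 A} (ht : t ∈ tor I) : t • pzero I = pzero I := ht.2

lemma diagSL_mem_tor (a : Aˣ) : diagSL a ∈ tor I := by rw [mem_tor]; simp
lemma E12_mem_tor {j : A} (hj : j ∈ I) : E12 j ∈ tor I := by rw [mem_tor]; simp [E12, hj]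
lemma E21_mem_tor {j : A} (hj : j ∈ I) : E21 j ∈ tor I := by rw [mem_tor]; simp [E21, hj]

lemma E12_one_smul_zero : (E12 1 : SL2 A) • pzero I = pnum I 1 := rfl

lemma E12_smul_inf (t : A) : E12 t • pinf I = pinf I :=
  smul_pinf I (by rw [mem_Gamma0]; simp [E12])

variable {V : Type*} [AddCommGroup V] {F : SL2 A → SL2 A → V} {η : SL2 A → PL I → V}
  (hη : ∀ γ δ x, F γ δ = η γ (δ • x) + η δ x - η (γ * δ) x)
include hη

lemma theta_mul (γ δ : SL2 A) (x y : PL I) : η (γ * δ) y - η (γ * δ) x =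
    (η γ (δ • y) - η γ (δ • x)) + (η δ y - η δ x) := by
  have h1 := hη γ δ x
  have h2 := hη γ δ y
  linear_combination (norm := abel) h2 - h1

lemma theta_conj {γ s t : SL2 A} (h : γ * t = s * γ) {x y : PL I} (hx : t • x = x)
    (hy : t • y = y) : η s (γ • y) - η s (γ • x) = η t y - η t x := by
  have h1 := theta_mul hη γ t x y
  have h2 := theta_mul hη s γ x y
  rw [h, hx, hy] at h1
  linear_combination (norm := abel) h1 - h2

lemma theta_add : ∀ s ∈ tor I, ∀ t ∈ tor I, η (s * t) (pzero I) - η (s * t) (pinf I) =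
    (η s (pzero I) - η s (pinf I)) + (η t (pzero I) - η t (pinf I)) := by
  intro s _ t ht
  rw [theta_mul hη, tor_inf ht, tor_zero ht]

variable {u : Aˣ} (hu : IsUnit ((u : A) ^ 2 - 1))
include hu

lemma theta_E12 (j : A) (hj : j ∈ I) : η (E12 j) (pzero I) - η (E12 j) (pinf I) = 0 :=
  add_E12 u hu (tor I) (fun t => η t (pzero I) - η t (pinf I)) (theta_add hη)
    (diagSL_mem_tor u) I (fun _ h => E12_mem_tor h) j hj

lemma theta_E21 (j : A) (hj : j ∈ I) : η (E21 j) (pzero I) - η (E21 j) (pinf I) = 0 :=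
  add_E21 u hu (tor I) (fun t => η t (pzero I) - η t (pinf I)) (theta_add hη)
    (diagSL_mem_tor u) I (fun _ h => E21_mem_tor h) j hj

/-- If `a² ≡ 1` modulo `I` then `diagSL a` acts trivially on the points `∞`, `0`, `1`.
Conjugating the pair `(∞, 0)` into `(∞, 1)` and `(0, 1)` shows that the character vanishes on
`diagSL a`. -/
lemma theta_diag (a : Aˣ) (ha : (a : A) - (a⁻¹ : Aˣ) ∈ I) :
    η (diagSL a) (pzero I) - η (diagSL a) (pinf I) = 0 := by
  have hone : diagSL a • pnum I 1 = pnum I 1 := by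
    rw [pnum, smul_pt, pt_eq_iff]
    simpa [cdet, sl_mul, E12, wey] using ha
  have ha' : ((a⁻¹ : Aˣ) : A) - a ∈ I := by rw [← neg_sub]; exact I.neg_mem ha
  -- the pair `(∞, 1)`
  have hi : ((a⁻¹ : Aˣ) : A) * ((a⁻¹ : Aˣ) - a) ∈ I := I.mul_mem_left _ ha'
  have e1 : η (E12 (((a⁻¹ : Aˣ) : A) * ((a⁻¹ : Aˣ) - a))) (pnum I 1) -
      η (E12 (((a⁻¹ : Aˣ) : A) * ((a⁻¹ : Aˣ) - a))) (pinf I) = 0 := by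
    have h := theta_conj hη (γ := E12 1) (t := E12 (((a⁻¹ : Aˣ) : A) * ((a⁻¹ : Aˣ) - a)))
      (s := E12 (((a⁻¹ : Aˣ) : A) * ((a⁻¹ : Aˣ) - a))) (by rw [← E12_add, ← E12_add, add_comm])
      (tor_inf (E12_mem_tor hi)) (tor_zero (E12_mem_tor hi))
    rwa [theta_E12 hη hu _ hi, E12_one_smul_zero, E12_smul_inf] at h
  have hone' : E12 (((a⁻¹ : Aˣ) : A) * ((a⁻¹ : Aˣ) - a)) • pnum I 1 = pnum I 1 := by
    rw [← E12_one_smul_zero, ← mul_smul, ← E12_add, add_comm, E12_add, mul_smul,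
      tor_zero (E12_mem_tor hi)]
  have e2 := theta_conj hη (γ := E12 1) (t := diagSL a)
    (s := diagSL a * E12 (((a⁻¹ : Aˣ) : A) * ((a⁻¹ : Aˣ) - a)))
    (by
      apply sl_ext <;> simp [sl_mul, E12])
    (tor_inf (diagSL_mem_tor a)) (tor_zero (diagSL_mem_tor a))
  rw [E12_one_smul_zero, E12_smul_inf, theta_mul hη, hone', E12_smul_inf, e1] at e2
  -- the pair `(0, 1)`
  have hj : (a : A) * (a - (a⁻¹ : Aˣ)) ∈ I := I.mul_mem_left _ ha
  have hm : diagSL a⁻¹ * E12 ((a : A) * (a - (a⁻¹ : Aˣ))) ∈ tor I :=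
    (tor I).mul_mem (diagSL_mem_tor _) (E12_mem_tor hj)
  have e3 := theta_conj hη (γ := slm 0 (-1) 1 (-1) (by ring))
    (t := diagSL a⁻¹ * E12 ((a : A) * (a - (a⁻¹ : Aˣ)))) (s := diagSL a)
    (by
      apply sl_ext <;> simp [sl_mul, E12]
      ring)
    (tor_inf hm) (tor_zero hm)
  have k1 : (slm 0 (-1) 1 (-1) (by ring) : SL2 A) • pinf I = pzero I := by
    rw [pinf, pzero, smul_pt, pt_eq_iff]; simp [cdet, wey]
  have k2 : (slm 0 (-1) 1 (-1) (by ring) : SL2 A) • pzero I = pnum I 1 := by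
    rw [pnum, pzero, smul_pt, pt_eq_iff]; simp [cdet, wey, sl_mul, E12]
  have e4 := theta_E12 hη hu _ hj
  have e5 := theta_add hη _ (diagSL_mem_tor a) _ (diagSL_mem_tor a⁻¹)
  have e6 := theta_add hη 1 (tor I).one_mem 1 (tor I).one_mem
  have e7 : diagSL a * diagSL a⁻¹ = 1 := by
    rw [← diagSL_mul, mul_inv_cancel]; apply sl_ext <;> simp
  rw [k1, k2, theta_add hη _ (diagSL_mem_tor _) _ (E12_mem_tor hj), e4] at e3
  rw [e7] at e5
  rw [mul_one] at e6
  linear_combination (norm := abel) e3 - e2 - e5 - e6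

end

/-! ### Invariant primitives on pairs -/

section
variable {A : Type*} [CommRing A] [IsLocalRing A] {I : Ideal A}
  (hI : I ≤ IsLocalRing.maximalIdeal A)
include hI

/-- The 1-cochain `η` can be corrected by a character of the multipliers so that its difference at
`0` and `∞` vanishes on the stabilizer of `(∞, 0)`. -/
lemma theta_normalize (hu : ∃ u : Aˣ, IsUnit ((u : A) ^ 2 - 1)) {F : SL2 A → SL2 A → QZ}
    {η : SL2 A → PL I → QZ} (hη : ∀ γ δ x, F γ δ = η γ (δ • x) + η δ x - η (γ * δ) x) :
    ∃ η₂ : SL2 A → PL I → QZ, (∀ γ δ x, F γ δ = η₂ γ (δ • x) + η₂ δ x - η₂ (γ * δ) x) ∧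
      ∀ t ∈ tor I, η₂ t (pzero I) = η₂ t (pinf I) := by
  obtain ⟨u, hu⟩ := hu
  obtain ⟨ε, hε, hεχ⟩ := exists_char_extend_mul
    ((powMonoidHom 2).comp (Units.map (Ideal.Quotient.mk I : A →* A ⧸ I)))
    (fun a => η (diagSL a) (pzero I) - η (diagSL a) (pinf I))
    (fun a b => by
      rw [diagSL_mul, theta_add hη _ (diagSL_mem_tor a) _ (diagSL_mem_tor b)])
    (fun a ha => by
      refine theta_diag hη hu a ?_
      have h1 : Ideal.Quotient.mk I (a : A) * Ideal.Quotient.mk I (a : A) = 1 := by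
        have := congrArg (Units.val) ha
        simpa [pow_two] using this
      rw [← Ideal.Quotient.eq_zero_iff_mem]
      have h2 : Ideal.Quotient.mk I (a : A) * Ideal.Quotient.mk I ((a⁻¹ : Aˣ) : A) = 1 := by
        rw [← map_mul]; simp
      rw [map_sub]
      linear_combination Ideal.Quotient.mk I ((a⁻¹ : Aˣ) : A) * h1 -
        Ideal.Quotient.mk I (a : A) * h2)
  have h2 : ∀ γ δ x, F γ δ = (η γ (δ • x) + ε (lamx I γ (δ • x))) + (η δ x + ε (lamx I δ x)) -
      (η (γ * δ) x + ε (lamx I (γ * δ) x)) := by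
    intro γ δ x
    rw [lamx_mul, hε]
    linear_combination (norm := abel) hη γ δ x
  refine ⟨fun γ x => η γ x + ε (lamx I γ x), h2, ?_⟩
  have hD : ∀ a : Aˣ, (η (diagSL a) (pzero I) + ε (lamx I (diagSL a) (pzero I))) -
      (η (diagSL a) (pinf I) + ε (lamx I (diagSL a) (pinf I))) = 0 := by
    intro a
    have k := hεχ a
    rw [pzero, lamx_of_mul I (diagSL_mem_Gamma0 I a⁻¹) (diagSL_wey a), pinf,
      lamx_one I _ (diagSL_mem_Gamma0 I a), lam_diagSL hI, lam_diagSL hI, map_inv]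
    rw [MonoidHom.comp_apply, powMonoidHom_apply, pow_two, hε] at k
    obtain ⟨w, hw⟩ : ∃ w, w = Units.map (Ideal.Quotient.mk I : A →* A ⧸ I) a := ⟨_, rfl⟩
    rw [← hw] at k ⊢
    have e1 := hε w w⁻¹
    have e2 := hε 1 1
    rw [mul_inv_cancel] at e1
    rw [mul_one] at e2
    rw [pzero, pinf] at k
    linear_combination (norm := abel) -k - e1 - e2
  intro t ht
  obtain ⟨a, ha⟩ := gamma0_unit hI (b := t) (mem_tor.1 ht).1
  have hj : t.1 1 0 * (a⁻¹ : Aˣ) ∈ I := I.mul_mem_right _ (mem_tor.1 ht).1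
  have hk : (a⁻¹ : Aˣ) * t.1 0 1 ∈ I := I.mul_mem_left _ (mem_tor.1 ht).2
  have e := theta_add h2 _ ((tor I).mul_mem (E21_mem_tor hj) (diagSL_mem_tor a)) _ (E12_mem_tor hk)
  rw [theta_add h2 _ (E21_mem_tor hj) _ (diagSL_mem_tor a), ← sl_decomp t a ha, hD,
    theta_E12 h2 hu _ hk, theta_E21 h2 hu _ hj, add_zero, add_zero] at e
  exact sub_eq_zero.1 e

/-- By transitivity on pairs, a normalized 1-cochain has a primitive on the pairs in general
position. -/
lemma exists_prim {V : Type*} [AddCommGroup V] {F : SL2 A → SL2 A → V} {η : SL2 A → PL I → V}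
    (hη : ∀ γ δ x, F γ δ = η γ (δ • x) + η δ x - η (γ * δ) x)
    (ht : ∀ t ∈ tor I, η t (pzero I) = η t (pinf I)) :
    ∃ β : PL I → PL I → V, Transgr (red I) β η F := by
  classical
  have hwd : ∀ γ γ' : SL2 A, γ • pinf I = γ' • pinf I → γ • pzero I = γ' • pzero I →
      η γ (pzero I) - η γ (pinf I) = η γ' (pzero I) - η γ' (pinf I) := by
    intro γ γ' h1 h2
    have m : γ⁻¹ * γ' ∈ tor I := by
      refine ⟨?_, ?_⟩
      · change (γ⁻¹ * γ') • pinf I = pinf I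
        rw [mul_smul, ← h1, inv_smul_smul]
      · change (γ⁻¹ * γ') • pzero I = pzero I
        rw [mul_smul, ← h2, inv_smul_smul]
    have e := theta_mul hη γ (γ⁻¹ * γ') (pinf I) (pzero I)
    rw [tor_inf m, tor_zero m, ht _ m, mul_inv_cancel_left] at e
    rw [e]; abel
  obtain ⟨β, hβ⟩ : ∃ β : PL I → PL I → V, ∀ γ : SL2 A,
      β (γ • pinf I) (γ • pzero I) = η γ (pzero I) - η γ (pinf I) := by
    refine ⟨fun x y => if h : ∃ γ : SL2 A, γ • pinf I = x ∧ γ • pzero I = y then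
      η h.choose (pzero I) - η h.choose (pinf I) else 0, fun γ => ?_⟩
    have h : ∃ γ' : SL2 A, γ' • pinf I = γ • pinf I ∧ γ' • pzero I = γ • pzero I := ⟨γ, rfl, rfl⟩
    refine (dif_pos h).trans ?_
    exact hwd _ _ h.choose_spec.1 h.choose_spec.2
  refine ⟨β, ⟨fun γ x y h => ?_, hη⟩⟩
  obtain ⟨δ, rfl, rfl⟩ := exists_smul_pair hI h
  rw [← mul_smul, ← mul_smul, hβ, hβ, theta_mul hη]
  abel

lemma diagSL_smul_pnum (u : Aˣ) {v v' : A} (h : v' - v * u ^ 2 ∈ I) :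
    diagSL u • pnum I v = pnum I v' := by
  rw [pnum, pnum, smul_pt, pt_eq_iff]
  have := I.mul_mem_left (-((u⁻¹ : Aˣ) : A)) h
  have hu := u.mul_inv
  convert this using 1
  simp [cdet, sl_mul, E12, wey]
  linear_combination (-(u : A) * v) * hu

/-- The coboundary of such a primitive is invariant, hence depends only on the square class
attached to a triple. -/
lemma exists_bb {V : Type*} [AddCommGroup V] {F : SL2 A → SL2 A → V} {η : SL2 A → PL I → V}
    {β : PL I → PL I → V} (t : Transgr (red I) β η F) :
    ∃ bb : SqCl (A ⧸ I) → V, ∀ x y z, red I x ≠ red I y → red I x ≠ red I z → red I y ≠ red I z →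
      β y z - β x z + β x y = bb (sqc (dtu I x y * dtu I y z * dtu I x z)) := by
  have hinv : ∀ (γ : SL2 A) x y z, red I x ≠ red I y → red I x ≠ red I z → red I y ≠ red I z →
      β (γ • y) (γ • z) - β (γ • x) (γ • z) + β (γ • x) (γ • y) = β y z - β x z + β x y := by
    intro γ x y z h1 h2 h3
    linear_combination (norm := abel) t.diff γ y z h3 - t.diff γ x z h2 + t.diff γ x y h1
  obtain ⟨b0, hb0⟩ : ∃ b0 : A → V, ∀ v, b0 v =
      β (pzero I) (pnum I v) - β (pinf I) (pnum I v) + β (pinf I) (pzero I) := ⟨_, fun _ => rfl⟩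
  have hb : ∀ v v' : Aˣ, sqc (Units.map (Ideal.Quotient.mk I : A →* A ⧸ I) (-v)) =
      sqc (Units.map (Ideal.Quotient.mk I : A →* A ⧸ I) (-v')) → b0 v = b0 v' := by
    intro v v' h
    obtain ⟨s, hs⟩ := sqc_eq_iff h
    obtain ⟨u, rfl⟩ := units_lift hI s
    have h1 : (v' : A) - v * (u : A) ^ 2 ∈ I := by
      rw [← Ideal.Quotient.eq_zero_iff_mem]
      have := congrArg Units.val hs
      simp at this
      simp [this]
    have e := hinv (diagSL u) _ _ _ (red_inf_zero hI) (red_inf_num hI (v : A)) (red_zero_num hI v)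
    rw [diagSL_smul_pnum hI u h1, diagSL_smul_pinf, diagSL_smul_pzero, ← hb0, ← hb0] at e
    exact e.symm
  choose l hl using units_lift hI
  refine ⟨fun s => b0 ((-(l (sqc_surj s).choose) : Aˣ) : A), fun x y z h1 h2 h3 => ?_⟩
  obtain ⟨γ, rfl, rfl⟩ := exists_smul_pair hI h1
  obtain ⟨z', rfl⟩ : ∃ z', z = γ • z' := ⟨γ⁻¹ • z, (smul_inv_smul γ z).symm⟩
  have h2' : red I (pinf I) ≠ red I z' := by simpa using red_smul_ne hI γ⁻¹ _ _ h2
  have h3' : red I (pzero I) ≠ red I z' := by simpa using red_smul_ne hI γ⁻¹ _ _ h3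
  obtain ⟨v, rfl⟩ := exists_num hI h2' h3'
  rw [hinv γ _ _ _ (red_inf_zero hI) h2' h3', ← hb0,
    sqc_smul hI γ (red_inf_zero hI) h2' h3', sqc_inf_zero_num hI]
  refine hb _ _ ?_
  rw [neg_neg, hl, (sqc_surj _).choose_spec]

/-- Applied to the points `∞`, `0`, `v`, `v / b`, the cocycle condition yields the Steinberg
relation. -/
lemma bb_steinberg {V : Type*} [AddCommGroup V] {β : PL I → PL I → V} {bb : SqCl (A ⧸ I) → V}
    (h : ∀ x y z, red I x ≠ red I y → red I x ≠ red I z → red I y ≠ red I z →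
      β y z - β x z + β x y = bb (sqc (dtu I x y * dtu I y z * dtu I x z)))
    (a b c : (A ⧸ I)ˣ) (hab : (a : A ⧸ I) + b = 1) :
    bb (sqc (c * a)) - bb (sqc (c * a * b)) + bb (sqc (c * b)) - bb (sqc c) = 0 := by
  obtain ⟨v, hv⟩ := units_lift hI (-c)
  obtain ⟨v', hv'⟩ := units_lift hI (-(c * b⁻¹))
  have ev : Ideal.Quotient.mk I (v : A) = -(c : A ⧸ I) := by simpa using congrArg Units.val hv
  have ev' : Ideal.Quotient.mk I (v' : A) = -((c : A ⧸ I) * (b⁻¹ : (A ⧸ I)ˣ)) := by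
    simpa using congrArg Units.val hv'
  have evv : Ideal.Quotient.mk I ((v : A) - v') = ((c * a * b⁻¹ : (A ⧸ I)ˣ) : A ⧸ I) := by
    rw [map_sub, ev, ev']
    push_cast
    linear_combination (-(c : A ⧸ I) * (b⁻¹ : (A ⧸ I)ˣ)) * hab + (c : A ⧸ I) * b.mul_inv
  have hvv : IsUnit ((v : A) - v') := isUnit_of_isUnit_mk hI (by rw [evv]; exact Units.isUnit _)
  have r01 := red_inf_zero hI
  have r02 := red_inf_num hI (v : A)
  have r03 := red_inf_num hI (v' : A)
  have r12 := red_zero_num hI v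
  have r13 := red_zero_num hI v'
  have r23 := red_num_num hI hvv
  have c01 : Ideal.Quotient.mk I (cdet (1 : SL2 A) wey) = ((1 : (A ⧸ I)ˣ) : A ⧸ I) := by
    simp [cdet, wey]
  have c0 : ∀ w : A, Ideal.Quotient.mk I (cdet (1 : SL2 A) (E12 w * wey)) =
      ((1 : (A ⧸ I)ˣ) : A ⧸ I) := by
    intro w; simp [cdet, wey, E12, sl_mul]
  have c12 : Ideal.Quotient.mk I (cdet wey (E12 (v : A) * wey)) = c := by
    simp [cdet, wey, E12, sl_mul, ev]
  have c13 : Ideal.Quotient.mk I (cdet wey (E12 (v' : A) * wey)) =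
      ((c * b⁻¹ : (A ⧸ I)ˣ) : A ⧸ I) := by
    simp [cdet, wey, E12, sl_mul, ev']
  have c23 : Ideal.Quotient.mk I (cdet (E12 (v : A) * wey) (E12 (v' : A) * wey)) =
      ((c * a * b⁻¹ : (A ⧸ I)ˣ) : A ⧸ I) := by
    rw [← evv]; simp [cdet, wey, E12, sl_mul]
  have t012 := sqc_triple hI 1 wey (E12 (v : A) * wey) _ _ _ r01 r02 r12 c01 c12 (c0 v)
  have t013 := sqc_triple hI 1 wey (E12 (v' : A) * wey) _ _ _ r01 r03 r13 c01 c13 (c0 v')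
  have t023 := sqc_triple hI 1 (E12 (v : A) * wey) (E12 (v' : A) * wey) _ _ _ r02 r03 r23
    (c0 v) c23 (c0 v')
  have t123 := sqc_triple hI wey (E12 (v : A) * wey) (E12 (v' : A) * wey) _ _ _ r12 r13 r23
    c12 c23 c13
  have s1 : sqc (1 * c * 1) = sqc c := by rw [one_mul, mul_one]
  have s2 : sqc (1 * (c * b⁻¹) * 1) = sqc (c * b) := by
    rw [one_mul, mul_one, ← sqc_mul_sq (c * b⁻¹) b]
    congr 1; simp [pow_two, mul_assoc]
  have s3 : sqc (1 * (c * a * b⁻¹) * 1) = sqc (c * a * b) := by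
    rw [one_mul, mul_one, ← sqc_mul_sq (c * a * b⁻¹) b]
    congr 1; simp [pow_two, mul_assoc]
  have s4 : sqc (c * (c * a * b⁻¹) * (c * b⁻¹)) = sqc (c * a) := by
    rw [← sqc_mul_sq (c * a) (c * b⁻¹)]
    congr 1; rw [pow_two]; ac_rfl
  rw [s1] at t012
  rw [s2] at t013
  rw [s3] at t023
  rw [s4] at t123
  have e012 := (h _ _ _ r01 r02 r12).trans (congrArg bb t012)
  have e013 := (h _ _ _ r01 r03 r13).trans (congrArg bb t013)
  have e023 := (h _ _ _ r02 r03 r23).trans (congrArg bb t023)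
  have e123 := (h _ _ _ r12 r13 r23).trans (congrArg bb t123)
  linear_combination (norm := abel) e012 - e013 + e023 - e123

end

/-- A function on square classes satisfying the Steinberg relations defines an additive map on the
Grothendieck–Witt ring. -/
lemma exists_gw_char {R : Type*} [CommRing R] (bb : SqCl R → QZ)
    (h : ∀ a b c : Rˣ, (a : R) + b = 1 →
      bb (sqc (c * a)) - bb (sqc (c * a * b)) + bb (sqc (c * b)) - bb (sqc c) = 0) :
    ∃ B : GWq ℤ R →+ QZ, ∀ u, B (gw u) = bb (sqc u) := by
  obtain ⟨f, hf⟩ : ∃ f : GRing ℤ R →+ QZ, ∀ u : Rˣ, f (gcl ℤ u) = bb (sqc u) := by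
    refine ⟨(Finsupp.linearCombination ℤ bb).toAddMonoidHom.comp
      MonoidAlgebra.coeffAddEquiv.toAddMonoidHom, fun u => ?_⟩
    change Finsupp.linearCombination ℤ bb (Finsupp.single (sqc u) 1) = _
    simp
  have key : ∀ x ∈ StRel ℤ R, ∀ r : GRing ℤ R, f (r * x) = 0 := by
    intro x hx
    rw [StRel] at hx
    induction hx using Submodule.span_induction with
    | mem x hx =>
      obtain ⟨a, rfl⟩ := hx
      intro r
      refine gring_hom_ext (f.comp (AddMonoidHom.mulRight _)) (fun c => ?_) r
      have e : gcl ℤ c * (gcc ℤ (a : Rˣ) * gcc ℤ (WU.usub a)) =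
          gcl ℤ (c * (a : Rˣ) * WU.usub a) - gcl ℤ (c * (a : Rˣ)) - gcl ℤ (c * WU.usub a) + gcl ℤ c := by
        rw [gcc, gcc, gcl_mul, gcl_mul, gcl_mul]; ring
      have h1 := h a (WU.usub a) c (by rw [WU.usub_coe]; ring)
      rw [AddMonoidHom.comp_apply, AddMonoidHom.mulRight_apply, e, map_add, map_sub, map_sub, hf,
        hf, hf, hf]
      linear_combination (norm := abel) -h1
    | zero => intro r; simp
    | add x y _ _ h1 h2 => intro r; rw [mul_add, map_add, h1, h2, add_zero]
    | smul s x _ h1 => intro r; rw [smul_eq_mul, ← mul_assoc, h1]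
  obtain ⟨B, hB⟩ := exists_char_extend (Ideal.Quotient.mk (StRel ℤ R)).toAddMonoidHom f
    (fun x hx => by simpa using key x (Ideal.Quotient.eq_zero_iff_mem.1 hx) 1)
  exact ⟨B, fun u => (hB _).trans (hf u)⟩

section
open GroupHomology
variable {A : Type*} [CommRing A] [IsLocalRing A] {I : Ideal A}
  (hI : I ≤ IsLocalRing.maximalIdeal A)
  (H : GPSet (SL2 A) (PL I) (PL (IsLocalRing.maximalIdeal A)) (red I))
  (hu : ∃ u : Aˣ, IsUnit ((u : A) ^ 2 - 1))
  {φ : PL I → PL I → GWq ℤ (A ⧸ I)} {η : SL2 A → PL I → GWq ℤ (A ⧸ I)}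
  {c : SL2 A → SL2 A → GWq ℤ (A ⧸ I)} (t : Transgr (red I) φ η c)
  (hφ : ∀ x y z, red I x ≠ red I y → red I x ≠ red I z → red I y ≠ red I z →
      φ y z - φ x z + φ x y = tri I x y z)
include hI H hu t hφ

/-- A `ℚ / ℤ`-valued cocycle which vanishes on `Γ₀(I)` is, on cycles, the composite of the
transgression of `tri` with a character of `GW(A / I)`. -/
lemma main_ker (f : Ch ℤ (SL2 A) 2 →ₗ[ℤ] QZ) (hf : ∀ y, f (dd ℤ (SL2 A) 2 y) = 0)
    (hB : ∀ b ∈ Gamma0 I, ∀ b' ∈ Gamma0 I, f (Finsupp.single ![b, b'] 1) = 0)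
    (z : Ch ℤ (SL2 A) 2) (hz : z ∈ cycles ℤ (SL2 A) 2) (h0 : evCh c z = 0) : f z = 0 := by
  obtain ⟨η₁, hη₁⟩ := rel_cocycle (Gamma0 I) (fun a b => f (Finsupp.single ![a, b] 1))
    (cocycle_of_linear f hf) hB
  obtain ⟨η₂, hη₂, hv⟩ := theta_normalize hI hu hη₁
  obtain ⟨β, hβ⟩ := exists_prim hI hη₂ hv
  obtain ⟨bb, hbb⟩ := exists_bb hI hβ
  obtain ⟨B, hBB⟩ := exists_gw_char bb (bb_steinberg hI hbb)
  obtain ⟨e, he⟩ := H.compare (pinf I) hβ (t.map B) (fun x y z h1 h2 h3 => by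
    rw [hbb x y z h1 h2 h3, ← hBB, ← map_sub, ← map_add, hφ x y z h1 h2 h3, tri])
  rw [linear_eq_evCh f, evCh_congr_cycles he hz, evCh_map, h0, map_zero]

end

/-! ### The exact sequence -/

open GroupHomology in
lemma dd_dd {G : Type*} [Group G] (y : Ch ℤ G 3) : dd ℤ G 1 (dd ℤ G 2 y) = 0 := by
  rw [linear_eq_evCh (dd ℤ G 1)]
  refine evCh_boundary _ (fun a b d => ?_) y
  simp only [dd_single, dfun_two, mul_assoc]
  abel

open GroupHomology in
lemma chmap_subtype_injective {G : Type*} [Group G] (B : Subgroup G) (n : ℕ) :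
    Function.Injective (chmap ℤ B.subtype n) :=
  Finsupp.mapDomain_injective (fun _ _ h => funext fun i => Subtype.ext (congrFun h i))

/-- Proposition: the cokernel of `H₂(Γ₀(I)) → H₂(SL₂(A))`.
Let `A` be a local ring whose residue field has at least four elements, `I` a proper
ideal, `R := A/I`.  Then there is an exact sequence
`H₂(Γ₀(I), ℤ) → H₂(SL₂(A), ℤ) → I²(R) → 0`,
where the first map is induced by the inclusion `Γ₀(I) ⊆ SL₂(A)` and `I(R)` is the
fundamental ideal of the Grothendieck–Witt ring of `R`. -/
theorem stmt14
    (A : Type) [CommRing A] [IsLocalRing A]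
    (hcard : 4 ≤ Nat.card (IsLocalRing.ResidueField A) ∨
      Infinite (IsLocalRing.ResidueField A))
    (I : Ideal A) (hI : I ≠ ⊤) :
    ∃ g : GroupHomology.H ℤ (SL2 A) 2 →+ ↥(IfundGW ℤ (A ⧸ I) ^ 2),
      Function.Surjective g ∧
      ∀ x : GroupHomology.H ℤ (SL2 A) 2,
        (g x = 0 ↔ x ∈ Set.range (GroupHomology.Hmap ℤ (Gamma0 I).subtype 2)) := by
  have hm : I ≤ IsLocalRing.maximalIdeal A := IsLocalRing.le_maximalIdeal hI
  obtain ⟨e, he⟩ := exists_four hcard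
  have H := gpset hm e he
  have hu := exists_unit_sq e he
  obtain ⟨φ, η, c, t, h0, hφ⟩ := exists_main hm H
  have hbd : ∀ y, evCh c (GroupHomology.dd ℤ (SL2 A) 2 y) = 0 :=
    evCh_boundary c (t.cocycle (pinf I))
  obtain ⟨L, hL⟩ : ∃ L : GroupHomology.ChQ ℤ (SL2 A) 2 →ₗ[ℤ] GWq ℤ (A ⧸ I),
      ∀ z, L (Submodule.Quotient.mk z) = evCh c z := by
    refine ⟨Submodule.liftQ _ (evCh c) ?_, fun z => rfl⟩
    rintro _ ⟨y, rfl⟩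
    exact hbd y
  have hmem : ∀ x : GroupHomology.H ℤ (SL2 A) 2, L x.1 ∈ IfundGW ℤ (A ⧸ I) ^ 2 := by
    rintro ⟨_, z, hz, rfl⟩
    exact (hL z).symm ▸ main_mem hm H t hφ z hz
  obtain ⟨g, hg⟩ : ∃ g : GroupHomology.H ℤ (SL2 A) 2 →+ ↥(IfundGW ℤ (A ⧸ I) ^ 2),
      ∀ x, (g x : GWq ℤ (A ⧸ I)) = L x.1 :=
    ⟨{ toFun := fun x => ⟨L x.1, hmem x⟩
       map_zero' := Subtype.ext (map_zero L)
       map_add' := fun x y => Subtype.ext (map_add L x.1 y.1) }, fun _ => rfl⟩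
  -- the cocycle `c` vanishes on `Γ₀(I)`, because `η` vanishes at the fixed point `∞`
  have hc0 : ∀ z, evCh c (GroupHomology.chmap ℤ (Gamma0 I).subtype 2 z) = 0 := by
    intro z
    have : (evCh c) ∘ₗ (GroupHomology.chmap ℤ (Gamma0 I).subtype 2) = 0 := by
      refine Finsupp.lhom_ext' (fun b => LinearMap.ext_ring ?_)
      simp only [LinearMap.comp_apply, Finsupp.lsingle_apply]
      rw [GroupHomology.chmap_single, eta_two (_ ∘ b), evCh_single,
        t.coc _ _ (pinf I), Function.comp_apply, Function.comp_apply, Subgroup.subtype_apply,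
        Subgroup.subtype_apply, smul_pinf I (b 1).2, h0, h0, h0]
      simp
    exact DFunLike.congr_fun this z
  refine ⟨g, fun y => ?_, fun x => ⟨fun hx => ?_, ?_⟩⟩
  · have hy : (y : GWq ℤ (A ⧸ I)) ∈ AddSubgroup.map (evCh c).toAddMonoidHom
        (GroupHomology.cycles ℤ (SL2 A) 2).toAddSubgroup :=
      exists_char_separate _ _ fun ψ hψ => main_char hm H hu t hφ ψ
        (fun z hz => hψ _ ⟨z, hz, rfl⟩) _ y.2
    obtain ⟨z, hz, hzy⟩ := hy
    refine ⟨GroupHomology.hcl ℤ (SL2 A) z hz, Subtype.ext ?_⟩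
    rw [hg]
    exact (hL z).trans hzy
  · obtain ⟨_, z, hz, rfl⟩ := x
    have hz0 : evCh c z = 0 := by
      rw [← hL z]
      exact (hg _).symm.trans (congrArg Subtype.val hx)
    have hS : z ∈ (LinearMap.range (GroupHomology.dd ℤ (SL2 A) 2)).toAddSubgroup ⊔
        (LinearMap.range (GroupHomology.chmap ℤ (Gamma0 I).subtype 2)).toAddSubgroup := by
      refine exists_char_separate _ _ fun f hf => ?_
      refine main_ker hm H hu t hφ f.toIntLinearMap
        (fun y => hf _ (AddSubgroup.mem_sup_left ⟨y, rfl⟩)) (fun b hb b' hb' => ?_) z hz hz0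
      refine hf _ (AddSubgroup.mem_sup_right ⟨Finsupp.single ![⟨b, hb⟩, ⟨b', hb'⟩] 1, ?_⟩)
      rw [GroupHomology.chmap_single]
      congr 1
      funext i
      fin_cases i <;> rfl
    obtain ⟨_, ⟨y, rfl⟩, _, ⟨z', rfl⟩, hyz⟩ := AddSubgroup.mem_sup.1 hS
    have hz' : z' ∈ GroupHomology.cycles ℤ (Gamma0 I) 2 := by
      refine LinearMap.mem_ker.2 (chmap_subtype_injective (Gamma0 I) 1 ?_)
      rw [map_zero, ← GroupHomology.chmap_comm_apply]
      have h1 : GroupHomology.dd ℤ (SL2 A) 1 z = 0 := hz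
      rwa [← hyz, map_add, dd_dd, zero_add] at h1
    refine ⟨GroupHomology.hcl ℤ _ z' hz', Subtype.ext ?_⟩
    rw [GroupHomology.Hmap_hcl]
    refine (Submodule.Quotient.eq _).2 ⟨-y, ?_⟩
    rw [map_neg, ← hyz]
    abel
  · rintro ⟨⟨_, z', hz', rfl⟩, rfl⟩
    refine Subtype.ext ((hg _).trans ?_)
    exact (hL _).trans (hc0 z')
end
end

section
/- Let A be a local ring whose residue field has at least four elements, let I be a proper ideal of A and set R := A/I. Then the natural homomorphism Γ₀(I) → R^×, (a b; c d) ↦ a mod I, is surjective and its kernel is exactly the commutator subgroup [Γ₀(I), Γ₀(I)]; consequently H₁(Γ₀(I), ℤ) ≅ R^×. -/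
/-!
The proof has an algebraic part and a homological part.

Since the residue field has an element outside `{0, 1, -1}`, there is a unit `u` of `A` such that
`u ^ 2 - 1` is a unit. The identities `⁅diag(u, u⁻¹), E₁₂(x)⁆ = E₁₂((u ^ 2 - 1) x)` and
`⁅diag(u⁻¹, u), E₂₁(y)⁆ = E₂₁((u ^ 2 - 1) y)` then show that the elementary matrices `E₁₂(x)`,
`x ∈ A`, and `E₂₁(y)`, `y ∈ I`, are commutators in `Γ₀(I)`. If `(a b; c d) ∈ Γ₀(I)` has
`a ≡ 1 mod I`, then `a` is a unit and
`(a b; c d) = E₂₁((c - (a - 1)) / a) E₁₂(1) E₂₁(a - 1) E₁₂((b - 1) / a)`,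
so the matrix is a product of commutators (`mem_commutator_of_sub_one_mem`). The other inclusion
holds because `R^×` is commutative, and surjectivity is witnessed by diagonal matrices, as units
of `A / I` lift to units of the local ring `A`.

For the homology, the differential `C₁ → C₀` of the bar complex vanishes, and `g ↦ [g]` is a
surjective homomorphism from `G` onto `C₁ / B₁`. Hence a surjection `f : G → Q` onto a commutative
group with kernel `[G, G]` induces an isomorphism `H₁(G, ℤ) ≅ Q` (`nonempty_H_one_equiv`).
-/

noncomputable section

/-! ### The first homology of a group -/

section FirstHomology

open GroupHomology

variable {G : Type*} [Group G]

lemma dd_pair (a b : G) : dd ℤ G 1 (Finsupp.single ![a, b] 1) =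
    Finsupp.single ![b] 1 - Finsupp.single ![a * b] 1 + Finsupp.single ![a] 1 := by
  have f0 : face 0 ![a, b] = ![b] := by
    funext m; fin_cases m; simp [face]
  have f1 : face 1 ![a, b] = ![a * b] := by
    funext m; fin_cases m; simp [face]
  have f2 : face 2 ![a, b] = ![a] := by
    funext m; fin_cases m; simp [face]
  rw [dd_single]
  unfold dfun
  rw [show (1 : ℕ) + 2 = 3 from rfl, Finset.sum_range_succ, Finset.sum_range_succ,
    Finset.sum_range_one, f0, f1, f2]
  simp only [pow_zero, pow_one, one_smul]
  module

lemma dd_zero_eq_zero : dd ℤ G 0 = 0 := by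
  refine Finsupp.lhom_ext' (fun g => LinearMap.ext_ring ?_)
  simp only [LinearMap.comp_apply, Finsupp.lsingle_apply]
  rw [dd_single]
  unfold dfun
  rw [show (0 : ℕ) + 2 = 2 from rfl, Finset.sum_range_succ, Finset.sum_range_one,
    Subsingleton.elim (face 1 g) (face 0 g)]
  simp

lemma Hsub_one_eq_top : Hsub ℤ G 1 = ⊤ := by
  have h : cycles ℤ G 1 = ⊤ := by
    change LinearMap.ker (dd ℤ G 0) = ⊤
    rw [dd_zero_eq_zero, LinearMap.ker_zero]
  rw [Hsub, h, Submodule.map_top, Submodule.range_mkQ]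

/-- The homomorphism `g ↦ [g]` from `G` to the group of `1`-chains modulo boundaries. -/
def barClass : G →* Multiplicative (ChQ ℤ G 1) :=
  MonoidHom.mk'
    (fun g => Multiplicative.ofAdd (Submodule.Quotient.mk (Finsupp.single ![g] (1 : ℤ))))
    (by
      intro a b
      rw [← ofAdd_add, ← Submodule.Quotient.mk_add]
      congr 1
      symm
      rw [Submodule.Quotient.eq]
      exact ⟨Finsupp.single ![a, b] 1, by rw [dd_pair]; abel⟩)

lemma barClass_surjective : Function.Surjective (barClass (G := G)) := by
  intro x
  obtain ⟨y, hy⟩ := Submodule.Quotient.mk_surjective _ (Multiplicative.toAdd x)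
  suffices h : ∀ y : Ch ℤ G 1, ∃ g : G,
      barClass g = Multiplicative.ofAdd (Submodule.Quotient.mk y) by
    obtain ⟨g, hg⟩ := h y
    exact ⟨g, by rw [hg, hy]; rfl⟩
  intro y
  induction y using Finsupp.induction_linear with
  | zero => exact ⟨1, by rw [map_one]; rfl⟩
  | add p q hp hq =>
    obtain ⟨g, hg⟩ := hp
    obtain ⟨h, hh⟩ := hq
    exact ⟨g * h, by rw [map_mul, hg, hh]; rfl⟩
  | single v n =>
    refine ⟨v 0 ^ n, ?_⟩
    have hv : ![v 0] = v := by
      funext m; fin_cases m; rfl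
    rw [map_zpow]
    change Multiplicative.ofAdd (Submodule.Quotient.mk (Finsupp.single ![v 0] (1 : ℤ))) ^ n = _
    rw [hv, ← ofAdd_zsmul, ← Submodule.Quotient.mk_smul]
    simp

/-- A homomorphism to a commutative group vanishes on boundaries, hence factors through the
`1`-chains modulo boundaries. -/
def barDesc {Q : Type*} [CommGroup Q] (f : G →* Q) : ChQ ℤ G 1 →ₗ[ℤ] Additive Q :=
  Submodule.liftQ _
    (Finsupp.linearCombination ℤ (fun v : Fin 1 → G => Additive.ofMul (f (v 0))))
    (by
      rw [LinearMap.range_le_ker_iff]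
      refine Finsupp.lhom_ext' (fun v => LinearMap.ext_ring ?_)
      have hv : v = ![v 0, v 1] := by
        funext m; fin_cases m <;> rfl
      simp only [LinearMap.comp_apply, Finsupp.lsingle_apply, LinearMap.zero_apply]
      rw [hv, dd_pair]
      simp [Finsupp.linearCombination_single])

lemma barDesc_barClass {Q : Type*} [CommGroup Q] (f : G →* Q) (g : G) :
    barDesc f (Multiplicative.toAdd (barClass g)) = Additive.ofMul (f g) := by
  change barDesc f (Submodule.Quotient.mk (Finsupp.single ![g] (1 : ℤ))) = _
  simp [barDesc, Submodule.liftQ_apply, Finsupp.linearCombination_single]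

theorem nonempty_H_one_equiv {Q : Type*} [CommGroup Q] (f : G →* Q)
    (hs : Function.Surjective f) (hk : f.ker = commutator G) :
    Nonempty (H ℤ G 1 ≃+ Additive Q) := by
  have hbij : Function.Bijective (barDesc f) := by
    constructor
    · rw [injective_iff_map_eq_zero]
      intro x hx
      obtain ⟨g, hg⟩ := barClass_surjective (Multiplicative.ofAdd x)
      have hx' : x = Multiplicative.toAdd (barClass g) := by rw [hg]; rfl
      rw [hx', barDesc_barClass] at hx
      have hgk : g ∈ f.ker := hx
      rw [hk] at hgk
      have h1 : barClass g = 1 := Abelianization.commutator_subset_ker barClass hgk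
      rw [hx', h1]; rfl
    · intro q
      obtain ⟨g, hg⟩ := hs (Additive.toMul q)
      exact ⟨Multiplicative.toAdd (barClass g), by rw [barDesc_barClass, hg]; rfl⟩
  exact ⟨((LinearEquiv.ofTop _ Hsub_one_eq_top).trans
    (LinearEquiv.ofBijective (barDesc f) hbij)).toAddEquiv⟩

end FirstHomology

/-! ### The commutator subgroup of `Γ₀(I)` -/

section Commutator

open scoped commutatorElement

variable {A : Type*} [CommRing A]

/-- The upper elementary matrix `E₁₂(x)` as an element of `Γ₀(I)`. -/
def upperE (I : Ideal A) (x : A) : Gamma0 I :=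
  ⟨⟨!![1, x; 0, 1], by simp [Matrix.det_fin_two_of]⟩, I.zero_mem⟩

/-- The lower elementary matrix `E₂₁(y)`, for `y ∈ I`, as an element of `Γ₀(I)`. -/
def lowerE (I : Ideal A) (y : A) (hy : y ∈ I) : Gamma0 I :=
  ⟨⟨!![1, 0; y, 1], by simp [Matrix.det_fin_two_of]⟩, hy⟩

lemma coe_upperE (I : Ideal A) (x : A) :
    ((upperE I x : SL2 A) : Matrix (Fin 2) (Fin 2) A) = !![1, x; 0, 1] := rfl

lemma coe_lowerE (I : Ideal A) (y : A) (hy : y ∈ I) :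
    ((lowerE I y hy : SL2 A) : Matrix (Fin 2) (Fin 2) A) = !![1, 0; y, 1] := rfl

lemma coe_diagSL (a : Aˣ) :
    ((diagSL a : SL2 A) : Matrix (Fin 2) (Fin 2) A) = !![(a : A), 0; 0, ((a⁻¹ : Aˣ) : A)] := rfl

lemma Gamma0_ext {I : Ideal A} {X Y : Gamma0 I}
    (h : ((X : SL2 A) : Matrix (Fin 2) (Fin 2) A) = (Y : SL2 A)) : X = Y :=
  Subtype.ext (Subtype.ext h)

lemma mem_commutator_of_mul_eq {G : Type*} [Group G] {d e w : G} (h : d * e = w * (e * d)) :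
    w ∈ commutator G := by
  have hw : w = ⁅d, e⁆ := by
    rw [commutatorElement_def, h]; group
  rw [hw, commutator_def]
  exact Subgroup.commutator_mem_commutator (Subgroup.mem_top _) (Subgroup.mem_top _)

lemma upperE_mem_commutator (I : Ideal A) (u : Aˣ) (hu : IsUnit ((u : A) ^ 2 - 1)) (x : A) :
    upperE I x ∈ commutator (Gamma0 I) := by
  obtain ⟨v, hv⟩ := hu
  refine mem_commutator_of_mul_eq (d := ⟨diagSL u, diagSL_mem_Gamma0 I u⟩)
    (e := upperE I ((v⁻¹ : Aˣ) * x)) (Gamma0_ext ?_)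
  have h1 : (u : A) * (u⁻¹ : Aˣ) = 1 := u.mul_inv
  have h2 : (v : A) * (v⁻¹ : Aˣ) = 1 := v.mul_inv
  have h3 : (u : A) * ((v⁻¹ : Aˣ) * x) = ((v⁻¹ : Aˣ) * x + x) * (u⁻¹ : Aˣ) := by
    linear_combination (-(u : A) * (v⁻¹ : Aˣ) * x) * h1 + (x * (u⁻¹ : Aˣ)) * h2
      - ((u⁻¹ : Aˣ) * (v⁻¹ : Aˣ) * x) * hv
  simp only [Subgroup.coe_mul, Matrix.SpecialLinearGroup.coe_mul, coe_upperE, coe_diagSL]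
  ext i j
  fin_cases i <;> fin_cases j <;> simp [Matrix.mul_apply, Fin.sum_univ_two]
  linear_combination h3

lemma lowerE_mem_commutator (I : Ideal A) (u : Aˣ) (hu : IsUnit ((u : A) ^ 2 - 1)) (y : A)
    (hy : y ∈ I) : lowerE I y hy ∈ commutator (Gamma0 I) := by
  obtain ⟨v, hv⟩ := hu
  refine mem_commutator_of_mul_eq (d := ⟨diagSL u⁻¹, diagSL_mem_Gamma0 I u⁻¹⟩)
    (e := lowerE I ((v⁻¹ : Aˣ) * y) (I.mul_mem_left _ hy)) (Gamma0_ext ?_)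
  have h1 : (u : A) * (u⁻¹ : Aˣ) = 1 := u.mul_inv
  have h2 : (v : A) * (v⁻¹ : Aˣ) = 1 := v.mul_inv
  have h3 : (u : A) * ((v⁻¹ : Aˣ) * y) = ((v⁻¹ : Aˣ) * y + y) * (u⁻¹ : Aˣ) := by
    linear_combination (-(u : A) * (v⁻¹ : Aˣ) * y) * h1 + (y * (u⁻¹ : Aˣ)) * h2
      - ((u⁻¹ : Aˣ) * (v⁻¹ : Aˣ) * y) * hv
  simp only [Subgroup.coe_mul, Matrix.SpecialLinearGroup.coe_mul, coe_lowerE, coe_diagSL]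
  ext i j
  fin_cases i <;> fin_cases j <;> simp [Matrix.mul_apply, Fin.sum_univ_two]
  linear_combination h3

lemma mem_commutator_of_sub_one_mem (I : Ideal A) (u : Aˣ) (hu : IsUnit ((u : A) ^ 2 - 1))
    (X : Gamma0 I) (a : Aˣ) (ha : ((X : SL2 A) : Matrix (Fin 2) (Fin 2) A) 0 0 = a)
    (haI : (a : A) - 1 ∈ I) : X ∈ commutator (Gamma0 I) := by
  obtain ⟨b, hb⟩ : ∃ b, b = ((X : SL2 A) : Matrix (Fin 2) (Fin 2) A) 0 1 := ⟨_, rfl⟩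
  obtain ⟨c, hc⟩ : ∃ c, c = ((X : SL2 A) : Matrix (Fin 2) (Fin 2) A) 1 0 := ⟨_, rfl⟩
  obtain ⟨d, hd⟩ : ∃ d, d = ((X : SL2 A) : Matrix (Fin 2) (Fin 2) A) 1 1 := ⟨_, rfl⟩
  have hcI : c ∈ I := hc ▸ X.2
  have hdet : (a : A) * d - b * c = 1 := by
    have h := (X : SL2 A).2
    rw [Matrix.det_fin_two, ha, ← hb, ← hc, ← hd] at h
    exact h
  have hy : (c - (a - 1)) * ((a⁻¹ : Aˣ) : A) ∈ I :=
    I.mul_mem_right _ (I.sub_mem hcI haI)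
  have hX : X = lowerE I _ hy * (upperE I 1 * (lowerE I _ haI *
      upperE I ((b - 1) * ((a⁻¹ : Aˣ) : A)))) := by
    apply Gamma0_ext
    have h1 : (a : A) * (a⁻¹ : Aˣ) = 1 := a.mul_inv
    have hXm : ((X : SL2 A) : Matrix (Fin 2) (Fin 2) A) = !![(a : A), b; c, d] := by
      rw [hb, hc, hd, ← ha]; exact Matrix.eta_fin_two _
    rw [hXm]
    simp only [Subgroup.coe_mul, Matrix.SpecialLinearGroup.coe_mul, coe_lowerE, coe_upperE]
    ext i j
    fin_cases i <;> fin_cases j <;> simp [Matrix.mul_apply, Fin.sum_univ_two]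
    · linear_combination (1 - b) * h1
    · linear_combination ((a⁻¹ : Aˣ) : A) * hdet
        - (d + (c - (a - 1)) * ((a⁻¹ : Aˣ) : A) * (b - 1) - 1) * h1
  rw [hX]
  exact mul_mem (lowerE_mem_commutator I u hu _ _) (mul_mem (upperE_mem_commutator I u hu _)
    (mul_mem (lowerE_mem_commutator I u hu _ _) (upperE_mem_commutator I u hu _)))

lemma exists_unit_sq_sub_one [IsLocalRing A]
    (hcard : 4 ≤ Nat.card (IsLocalRing.ResidueField A) ∨
      Infinite (IsLocalRing.ResidueField A)) :
    ∃ u : Aˣ, IsUnit ((u : A) ^ 2 - 1) := by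
  classical
  obtain ⟨x, hx⟩ : ∃ x : IsLocalRing.ResidueField A,
      x ∉ ({0, 1, -1} : Finset (IsLocalRing.ResidueField A)) := by
    rcases hcard with h | h
    · by_contra! hall
      have hf : Finite (IsLocalRing.ResidueField A) := Nat.finite_of_card_ne_zero (by omega)
      have := Fintype.ofFinite (IsLocalRing.ResidueField A)
      have h3 : Fintype.card (IsLocalRing.ResidueField A) ≤ 3 := by
        rw [← Finset.card_univ]
        exact (Finset.card_le_card fun x _ => hall x).trans Finset.card_le_three
      rw [Nat.card_eq_fintype_card] at h
      omega
    · exact Infinite.exists_notMem_finset _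
  simp only [Finset.mem_insert, Finset.mem_singleton, not_or] at hx
  obtain ⟨hx0, hx1, hx2⟩ := hx
  obtain ⟨a, rfl⟩ := IsLocalRing.residue_surjective x
  have ha : IsUnit a := (IsLocalRing.residue_ne_zero_iff_isUnit a).1 hx0
  refine ⟨ha.unit, (IsLocalRing.residue_ne_zero_iff_isUnit _).1 ?_⟩
  rw [IsUnit.unit_spec, map_sub, map_pow, map_one, sub_ne_zero]
  intro h
  rcases sq_eq_sq_iff_eq_or_eq_neg.1 (h.trans (one_pow 2).symm) with h | h
  · exact hx1 h
  · exact hx2 h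

end Commutator

/-- Let `A` be a local ring whose residue field has at least four elements, `I` a proper ideal,
`R := A/I`.  The natural homomorphism `Γ₀(I) → R^×`, `(a b; c d) ↦ a mod I`, is surjective
with kernel exactly the commutator subgroup of `Γ₀(I)`;  consequently `H₁(Γ₀(I), ℤ) ≅ R^×`. -/
theorem stmt15
    (A : Type) [CommRing A] [IsLocalRing A]
    (hcard : 4 ≤ Nat.card (IsLocalRing.ResidueField A) ∨
      Infinite (IsLocalRing.ResidueField A))
    (I : Ideal A) (hI : I ≠ ⊤)
    (f : ↥(Gamma0 I) →* (A ⧸ I)ˣ)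
    (hf : ∀ X : ↥(Gamma0 I),
      ((f X : (A ⧸ I)ˣ) : A ⧸ I) =
        Ideal.Quotient.mk I (((X : SL2 A) : Matrix (Fin 2) (Fin 2) A) 0 0)) :
    Function.Surjective f ∧ f.ker = commutator ↥(Gamma0 I) ∧
      Nonempty (GroupHomology.H ℤ ↥(Gamma0 I) 1 ≃+ Additive (A ⧸ I)ˣ) := by
  have hIm : ∀ t ∈ I, t ∈ IsLocalRing.maximalIdeal A :=
    fun t ht => IsLocalRing.le_maximalIdeal hI ht
  have hunit : ∀ a s : A, a * s - 1 ∈ I → IsUnit a := by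
    intro a s h
    by_contra ha
    have h1 : a * s ∈ IsLocalRing.maximalIdeal A := Ideal.mul_mem_right _ _ ha
    have h2 := Ideal.sub_mem _ h1 (hIm _ h)
    rw [sub_sub_cancel] at h2
    exact (IsLocalRing.maximalIdeal.isMaximal A).ne_top ((Ideal.eq_top_iff_one _).2 h2)
  have hsurj : Function.Surjective f := by
    intro r
    obtain ⟨a, ha⟩ := Ideal.Quotient.mk_surjective (r : A ⧸ I)
    obtain ⟨s, hs⟩ := Ideal.Quotient.mk_surjective ((r⁻¹ : (A ⧸ I)ˣ) : A ⧸ I)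
    have hau : IsUnit a := by
      apply hunit a s
      rw [← Ideal.Quotient.eq, map_mul, ha, hs, map_one, Units.mul_inv]
    refine ⟨⟨diagSL hau.unit, diagSL_mem_Gamma0 I _⟩, Units.ext ?_⟩
    rw [hf, ← ha]
    simp [coe_diagSL]
  have hker : f.ker = commutator ↥(Gamma0 I) := by
    apply le_antisymm
    · intro X hX
      obtain ⟨u, hu⟩ := exists_unit_sq_sub_one hcard
      have h1 : ((X : SL2 A) : Matrix (Fin 2) (Fin 2) A) 0 0 - 1 ∈ I := by
        rw [← Ideal.Quotient.eq, ← hf, MonoidHom.mem_ker.1 hX, Units.val_one, map_one]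
      obtain ⟨a, ha⟩ := hunit _ 1 (by rwa [mul_one])
      exact mem_commutator_of_sub_one_mem I u hu X a ha.symm (ha ▸ h1)
    · exact Abelianization.commutator_subset_ker f
  exact ⟨hsurj, hker, nonempty_H_one_equiv f hsurj hker⟩
end
end
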